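/- arXiv:1202.4327 — 2 statements merged into one kernel-verified Lean document; each statement's English description precedes it below -/
import Mathlib

section
/- Let u be the normalized Airy function, 0 < δ'₁ < δ'₂ < ... the increasing enumeration of the zeros of h ↦ u'(-h) on (0,∞), pₖ := (u'(0)²/2)·(δ'ₖ)^{-4}, and f_{2/3} the Mittag-Leffler density of index 2/3. Define ν₁(x) := ∑_{k=1}^∞ pₖ·(δ'ₖ/2)·f_{2/3}(δ'ₖ·|x|) and ν̂₁(x) := ∑_{k=1}^∞ pₖ·(δ'ₖ/2)·e^{-δ'ₖ·|x|} for x ∈ ℝ. Then both series converge for every x ∈ ℝ and for every x ∈ ℝ: ∫₀^∞ e^{-t}·t^{-2/3}·ν₁(t^{-2/3}·x) dt = ν̂₁(x). (ν₁ is the density of the position X(1) of the true self-repelling motion at time 1 and ν̂₁ the density of the position at an independent exponential time.) -/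
open Real MeasureTheory Set Filter Topology

noncomputable section

/-- The Mittag-Leffler density of index `2/3`, defined by its entire power series. -/
def mittagLeffler23 (x : ℝ) : ℝ :=
  (1 / π) * ∑' k : ℕ,
    (Real.sin (2 * π * ((k : ℝ) + 1) / 3) * Real.Gamma (2 * ((k : ℝ) + 1) / 3) /
      (Nat.factorial k : ℝ)) * (-x) ^ k

/-- energy argument: a solution cannot vanish together with its derivative -/
lemma airy_ne (v w : ℝ → ℝ) (hv : ∀ x, HasDerivAt v (w x) x)
    (hw : ∀ x, HasDerivAt w (-(2 * x * v x)) x) (h0 : v 0 = 1) (a : ℝ) (ha : 0 ≤ a)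
    (hwa : w a = 0) : v a ≠ 0 := by
  intro hva
  have hmono : MonotoneOn (fun x => (v x ^ 2 + w x ^ 2) * Real.exp ((1 + 2 * a) * x)) (Icc 0 a) := by
    have hd : ∀ x, HasDerivAt (fun x => (v x ^ 2 + w x ^ 2) * Real.exp ((1 + 2 * a) * x))
        ((2 * v x * w x + 2 * w x * (-(2 * x * v x))) * Real.exp ((1 + 2 * a) * x) +
          (v x ^ 2 + w x ^ 2) * (Real.exp ((1 + 2 * a) * x) * (1 + 2 * a))) x := by
      intro x
      have h1 := (((hv x).pow 2).add ((hw x).pow 2))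
      have h2 : HasDerivAt (fun x => Real.exp ((1 + 2 * a) * x))
          (Real.exp ((1 + 2 * a) * x) * (1 + 2 * a)) x := by
        have := ((hasDerivAt_id x).const_mul (1 + 2 * a)).exp
        simpa using this
      have h3 := h1.mul h2
      simp only [Nat.cast_ofNat, Nat.add_one_sub_one, pow_one] at h3
      exact h3
    apply monotoneOn_of_deriv_nonneg (convex_Icc 0 a)
    · exact fun x _ => (hd x).continuousAt.continuousWithinAt
    · exact fun x _ => (hd x).differentiableAt.differentiableWithinAt
    · intro x hx
      rw [interior_Icc] at hx
      rw [(hd x).deriv]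
      have he := Real.exp_pos ((1 + 2 * a) * x)
      have hx1 := hx.1
      have hx2 := hx.2
      have : (2 * v x * w x + 2 * w x * (-(2 * x * v x))) * Real.exp ((1 + 2 * a) * x) +
          (v x ^ 2 + w x ^ 2) * (Real.exp ((1 + 2 * a) * x) * (1 + 2 * a)) =
          Real.exp ((1 + 2 * a) * x) * ((v x + w x) ^ 2 + 2 * x * (v x - w x) ^ 2 +
            2 * (a - x) * (v x ^ 2 + w x ^ 2)) := by ring
      rw [this]
      have : 0 ≤ a - x := by linarith
      positivity
  have := hmono (left_mem_Icc.2 ha) (right_mem_Icc.2 ha) ha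
  simp [hva, hwa, h0] at this
  nlinarith [sq_nonneg (w 0)]

lemma airy_gap (v w : ℝ → ℝ) (hv : ∀ x, HasDerivAt v (w x) x)
    (hw : ∀ x, HasDerivAt w (-(2 * x * v x)) x) (h0 : v 0 = 1) (a b : ℝ) (ha : 0 < a)
    (hab : a < b) (hwa : w a = 0) (hwb : w b = 0) : 1 ≤ 2 * b * (b - a) ^ 2 := by
  obtain ⟨c, hc, hc0⟩ := exists_hasDerivAt_eq_zero hab
    (fun x _ => (hw x).continuousAt.continuousWithinAt) (hwa.trans hwb.symm)
    (fun x _ => hw x)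
  have hcpos : 0 < c := ha.trans hc.1
  have hvc : v c = 0 := by
    have : c * v c = 0 := by linarith
    rcases mul_eq_zero.1 this with h | h
    · linarith
    · exact h
  have hvcont : Continuous v := continuous_iff_continuousAt.2 fun x => (hv x).continuousAt
  obtain ⟨m, hm, hmax⟩ := isCompact_Icc.exists_isMaxOn (nonempty_Icc.2 hc.1.le)
    (f := fun x => |v x|) hvcont.abs.continuousOn
  set M := |v m| with hM
  have hMx : ∀ x ∈ Icc a c, |v x| ≤ M := fun x hx => hmax hx
  have hMpos : 0 < M :=
    (abs_pos.2 (airy_ne v w hv hw h0 a ha.le hwa)).trans_le (hMx a (left_mem_Icc.2 hc.1.le))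
  have hwbd : ∀ x ∈ Icc a c, |w x| ≤ 2 * b * M * (b - a) := by
    intro x hx
    have := (convex_Icc a c).norm_image_sub_le_of_norm_hasDerivWithin_le (f := w)
      (f' := fun x => -(2 * x * v x)) (C := 2 * b * M)
      (fun y _ => (hw y).hasDerivWithinAt) (fun y hy => by
        rw [norm_neg, Real.norm_eq_abs, abs_mul, abs_of_nonneg (by linarith [hy.1] : 0 ≤ 2 * y)]
        have := hMx y hy
        have := hy.2
        have := hc.2
        have := hy.1
        have hb0 : 0 < b := ha.trans hab
        have hyb : y ≤ b := hy.2.trans hc.2.le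
        gcongr) (left_mem_Icc.2 hc.1.le) hx
    rw [hwa, sub_zero, Real.norm_eq_abs, Real.norm_eq_abs,
      abs_of_nonneg (by linarith [hx.1] : 0 ≤ x - a)] at this
    refine this.trans ?_
    have : x ≤ b := hx.2.trans hc.2.le
    have : 0 < b := ha.trans hab
    gcongr
  have := (convex_Icc a c).norm_image_sub_le_of_norm_hasDerivWithin_le (f := v)
      (f' := w) (C := 2 * b * M * (b - a))
      (fun y _ => (hv y).hasDerivWithinAt) hwbd hm (right_mem_Icc.2 hc.1.le)
  rw [hvc, zero_sub, norm_neg, Real.norm_eq_abs, Real.norm_eq_abs,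
    abs_of_nonneg (by linarith [hm.2] : 0 ≤ c - m)] at this
  have hb : 0 < b := ha.trans hab
  have h2 : 2 * b * M * (b - a) * (c - m) ≤ 2 * b * M * (b - a) * (b - a) := by
    have : 0 < b - a := by linarith
    have := hm.1
    have := hc.2
    gcongr
  have h3 : M * 1 ≤ M * (2 * b * (b - a) ^ 2) := by
    calc M * 1 = M := mul_one _
      _ ≤ 2 * b * M * (b - a) * (b - a) := this.trans h2
      _ = _ := by ring
  exact le_of_mul_le_mul_left h3 hMpos

lemma summable_delta (u : ℝ → ℝ) (hu_smooth : ContDiff ℝ 2 u)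
    (hu_ode : ∀ h : ℝ, deriv (deriv u) h = 2 * h * u h)
    (hu_zero : u 0 = 1)
    (δ : ℕ → ℝ) (hδ_pos : ∀ k, 0 < δ k) (hδ_mono : StrictMono δ)
    (hδ_zero : ∀ k, deriv u (-(δ k)) = 0) : Summable (fun k => ((δ k) ^ 3)⁻¹) := by
  have hdu : Differentiable ℝ u := hu_smooth.differentiable (by norm_num)
  have hddu : Differentiable ℝ (deriv u) := by
    have : ContDiff ℝ 1 (deriv u) := by
      have h : ContDiff ℝ (1 + 1) u := by simpa [one_add_one_eq_two] using hu_smooth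
      exact (contDiff_succ_iff_deriv.1 h).2.2
    exact this.differentiable (by norm_num)
  have hv : ∀ x, HasDerivAt (fun x => u (-x)) (-deriv u (-x)) x := by
    intro x
    have := (hdu (-x)).hasDerivAt.comp x (hasDerivAt_neg x)
    simpa [Function.comp_def] using this
  have hw : ∀ x, HasDerivAt (fun x => -deriv u (-x)) (-(2 * x * u (-x))) x := by
    intro x
    have := ((hddu (-x)).hasDerivAt.comp x (hasDerivAt_neg x)).neg
    rw [hu_ode] at this
    have e : -(2 * x * u (-x)) = -(2 * -x * u (-x) * -1) := by ring
    rw [e]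
    exact this
  have hgap : ∀ k, 1 ≤ 2 * δ (k+1) * (δ (k+1) - δ k) ^ 2 := fun k =>
    airy_gap _ _ hv hw (by simpa using hu_zero) _ _ (hδ_pos k) (hδ_mono (Nat.lt_succ_self k))
      (by simp [hδ_zero]) (by simp [hδ_zero])
  have hs : ∀ k, (δ k) ^ 3 = (δ k * √(δ k)) ^ 2 := by
    intro k
    rw [mul_pow, Real.sq_sqrt (hδ_pos k).le]; ring
  have hlow : ∀ k : ℕ, (k : ℝ) / 2 ≤ δ k * √(δ k) := by
    intro k
    induction k with
    | zero => have := hδ_pos 0; simp; positivity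
    | succ k ih =>
      have h1 := hgap k
      have hlt : δ k < δ (k+1) := hδ_mono (Nat.lt_succ_self k)
      have hs1 : √(δ k) ≤ √(δ (k+1)) := Real.sqrt_le_sqrt hlt.le
      have hsq := Real.sq_sqrt (hδ_pos (k+1)).le
      have h2 : 1/2 ≤ √(δ (k+1)) * (δ (k+1) - δ k) := by
        have h0 : 0 ≤ √(δ (k+1)) * (δ (k+1) - δ k) :=
          mul_nonneg (Real.sqrt_nonneg _) (by linarith)
        have : (1/2 : ℝ) ≤ (√(δ (k+1)) * (δ (k+1) - δ k)) ^ 2 := by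
          rw [mul_pow, hsq]; linarith
        nlinarith
      have h3 : δ k * √(δ k) ≤ δ k * √(δ (k+1)) := by
        have := (hδ_pos k).le
        gcongr
      push_cast
      nlinarith
  rw [← summable_nat_add_iff 1]
  have hsum : Summable (fun k : ℕ => 4 * (((k + 1 : ℕ) : ℝ) ^ 2)⁻¹) := by
    apply Summable.mul_left
    exact (summable_nat_add_iff 1).2 (Real.summable_nat_pow_inv.2 (by norm_num : 1 < 2))
  refine Summable.of_nonneg_of_le (fun k => ?_) (fun k => ?_) hsum
  · have := hδ_pos (k+1); positivity
  · have h1 := hlow (k+1)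
    rw [hs]
    have : (4 : ℝ) * (((k + 1 : ℕ) : ℝ) ^ 2)⁻¹ = ((((k+1 : ℕ) : ℝ) / 2) ^ 2)⁻¹ := by
      rw [div_pow]; rw [inv_div]; norm_num; ring
    rw [this]
    gcongr

/-- Laplace transform along the half line. -/
def LTr (g : ℝ → ℂ) (s : ℂ) : ℂ := ∫ w in Ioi (0:ℝ), g w * Complex.exp (-s * w)

/-- Laplace integrability for every positive abscissa. -/
def LInt (g : ℝ → ℂ) : Prop := AEStronglyMeasurable g (volume.restrict (Ioi (0:ℝ))) ∧
  ∀ ε : ℝ, 0 < ε → IntegrableOn (fun w => ‖g w‖ * Real.exp (-ε * w)) (Ioi (0:ℝ))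

lemma norm_cexp_neg_mul (s : ℂ) (w : ℝ) : ‖Complex.exp (-s * w)‖ = Real.exp (-s.re * w) := by
  rw [Complex.norm_exp]; simp

lemma LInt.mul_id {g : ℝ → ℂ} (h : LInt g) : LInt (fun w => (w : ℂ) * g w) := by
  refine ⟨(Complex.continuous_ofReal.aestronglyMeasurable).mul h.1, fun ε hε => ?_⟩
  have h2 := (h.2 (ε / 2) (by positivity)).const_mul (2 / ε)
  refine Integrable.mono' h2 ?_ ?_
  · exact ((Complex.continuous_ofReal.aestronglyMeasurable).mul h.1).norm.mul
      (by fun_prop : Continuous fun w : ℝ => Real.exp (-ε * w)).aestronglyMeasurable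
  · refine (ae_restrict_iff' measurableSet_Ioi).2 (Eventually.of_forall fun w hw => ?_)
    have hw0 : (0:ℝ) < w := hw
    rw [Real.norm_of_nonneg (by positivity), norm_mul, Complex.norm_real, Real.norm_of_nonneg hw0.le]
    have h3 : w ≤ 2 / ε * Real.exp (ε / 2 * w) := by
      have := Real.add_one_le_exp (ε / 2 * w)
      have h4 : w = 2 / ε * (ε / 2 * w) := by field_simp
      calc w = 2 / ε * (ε / 2 * w) := h4
        _ ≤ _ := by gcongr; linarith
    have h5 : Real.exp (-(ε / 2) * w) = Real.exp (ε / 2 * w) * Real.exp (-ε * w) := by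
      rw [← Real.exp_add]; ring_nf
    rw [h5]
    calc w * ‖g w‖ * Real.exp (-ε * w)
        ≤ (2 / ε * Real.exp (ε / 2 * w)) * ‖g w‖ * Real.exp (-ε * w) := by gcongr
      _ = _ := by ring

lemma LInt.integrable {g : ℝ → ℂ} (h : LInt g) {s : ℂ} (hs : 0 < s.re) :
    IntegrableOn (fun w : ℝ => g w * Complex.exp (-s * w)) (Ioi (0:ℝ)) := by
  refine Integrable.mono' (h.2 s.re hs) ?_ (Eventually.of_forall fun w => ?_)
  · exact h.1.mul (by fun_prop : Continuous fun w : ℝ => Complex.exp (-s * w)).aestronglyMeasurable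
  · rw [norm_mul, norm_cexp_neg_mul]

lemma LInt.of_bound {g : ℝ → ℂ} (hm : Measurable g) (b : ℝ) (hb : -1 < b)
    (h : ∀ w, 0 < w → ‖g w‖ ≤ w ^ b) : LInt g := by
  refine ⟨hm.aestronglyMeasurable, fun ε hε => ?_⟩
  have := integrableOn_rpow_mul_exp_neg_mul_rpow hb one_pos hε
  refine Integrable.mono' this ?_ ?_
  · exact (hm.norm.mul (by fun_prop)).aestronglyMeasurable
  · refine (ae_restrict_iff' measurableSet_Ioi).2 (Eventually.of_forall fun w hw => ?_)
    rw [Real.norm_of_nonneg (by positivity), Real.rpow_one]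
    gcongr
    exact h w hw

lemma LTr_hasDerivAt {g : ℝ → ℂ} (h : LInt g) {s : ℂ} (hs : 0 < s.re) :
    HasDerivAt (LTr g) (-LTr (fun w => (w:ℂ) * g w) s) s := by
  have hexp : ∀ s : ℂ, AEStronglyMeasurable (fun w : ℝ => Complex.exp (-s * w))
      (volume.restrict (Ioi (0:ℝ))) := fun s =>
    (by fun_prop : Continuous fun w : ℝ => Complex.exp (-s * w)).aestronglyMeasurable
  have hU : {s' : ℂ | s.re / 2 < s'.re} ∈ 𝓝 s :=
    (isOpen_lt continuous_const Complex.continuous_re).mem_nhds (by simp; linarith)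
  have key := hasDerivAt_integral_of_dominated_loc_of_deriv_le (μ := volume.restrict (Ioi (0:ℝ)))
    (F := fun (s : ℂ) (w : ℝ) => g w * Complex.exp (-s * w))
    (F' := fun (s : ℂ) (w : ℝ) => -((w : ℂ) * g w * Complex.exp (-s * w)))
    (bound := fun w => ‖(w:ℂ) * g w‖ * Real.exp (-(s.re/2) * w)) (x₀ := s) hU
    (Eventually.of_forall fun s => h.1.mul (hexp s)) (h.integrable hs)
    ((h.mul_id.1.mul (hexp s)).neg) ?_ (h.mul_id.2 _ (by positivity)) ?_
  · have := key.2
    simp only [integral_neg] at this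
    exact this
  · refine (ae_restrict_iff' measurableSet_Ioi).2 (Eventually.of_forall fun w hw s' hs' => ?_)
    rw [norm_neg, norm_mul, norm_cexp_neg_mul]
    have h1 : s.re / 2 < s'.re := hs'
    have hw0 : (0:ℝ) < w := hw
    gcongr
  · refine Eventually.of_forall fun w s' _ => ?_
    have h1 : HasDerivAt (fun s : ℂ => -s * w) (-(w:ℂ)) s' := by
      have := ((hasDerivAt_id s').neg.mul_const (w:ℂ))
      simpa using this
    have h2 := h1.cexp.const_mul (g w)
    have e : -((w : ℂ) * g w * Complex.exp (-s' * w)) = g w * (Complex.exp (-s' * w) * -(w:ℂ)) := by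
      ring
    rw [e]; exact h2

lemma exp_re_pos {l : ℂ} (hl : |l.im| < π / 2) : 0 < (Complex.exp l).re := by
  rw [Complex.exp_re]
  have := abs_lt.1 hl
  exact mul_pos (Real.exp_pos _) (Real.cos_pos_of_mem_Ioo ⟨this.1, this.2⟩)

lemma LInt_rpow (b : ℝ) (hb : -1 < b) : LInt (fun w => ((w ^ b : ℝ) : ℂ)) := by
  refine LInt.of_bound (by fun_prop) b hb fun w hw => ?_
  rw [Complex.norm_real, Real.norm_of_nonneg (by positivity)]

lemma LTr_rpow (a : ℝ) (ha : 0 < a) {l : ℂ} (hl : |l.im| < π / 2) :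
    LTr (fun w => ((w ^ (a - 1) : ℝ) : ℂ)) (Complex.exp l) =
      Real.Gamma a * Complex.exp (-a * l) := by
  have hopen : IsOpen {l : ℂ | |l.im| < π / 2} :=
    isOpen_lt (Complex.continuous_im.abs) continuous_const
  have hconv : Convex ℝ {l : ℂ | |l.im| < π / 2} := by
    have : {l : ℂ | |l.im| < π / 2} = Complex.imLm ⁻¹' (Ioo (-(π/2)) (π/2)) := by
      ext l; simp [abs_lt]
    rw [this]
    exact (convex_Ioo _ _).linear_preimage _
  have hLI := LInt_rpow (a - 1) (by linarith)
  have hA : AnalyticOnNhd ℂ (fun l => LTr (fun w => ((w ^ (a - 1) : ℝ) : ℂ)) (Complex.exp l))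
      {l : ℂ | |l.im| < π / 2} := by
    refine DifferentiableOn.analyticOnNhd (fun l hl => ?_) hopen
    exact ((LTr_hasDerivAt hLI (exp_re_pos hl)).comp l
      (Complex.hasDerivAt_exp l)).differentiableAt.differentiableWithinAt
  have hB : AnalyticOnNhd ℂ (fun l : ℂ => (Real.Gamma a : ℂ) * Complex.exp (-a * l))
      {l : ℂ | |l.im| < π / 2} :=
    DifferentiableOn.analyticOnNhd (by fun_prop) hopen
  have hreal : ∀ r : ℝ, LTr (fun w => ((w ^ (a - 1) : ℝ) : ℂ)) (Complex.exp r) =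
      Real.Gamma a * Complex.exp (-a * r) := by
    intro r
    have h1 := Real.integral_rpow_mul_exp_neg_mul_Ioi ha (Real.exp_pos r)
    unfold LTr
    have h2 : ∀ w : ℝ, ((w ^ (a - 1) : ℝ) : ℂ) * Complex.exp (-Complex.exp r * w) =
        ((w ^ (a - 1) * Real.exp (-(Real.exp r * w)) : ℝ) : ℂ) := by
      intro w; push_cast; rw [neg_mul]
    simp_rw [h2]
    rw [integral_complex_ofReal, h1, one_div, ← Real.exp_neg, ← Real.exp_mul]
    push_cast
    rw [mul_comm]
    congr 2
    ring
  have hfreq : ∃ᶠ l in 𝓝[≠] (0:ℂ), LTr (fun w => ((w ^ (a - 1) : ℝ) : ℂ)) (Complex.exp l) =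
      Real.Gamma a * Complex.exp (-a * l) := by
    have ht : Tendsto (fun r : ℝ => (r : ℂ)) (𝓝[≠] 0) (𝓝[≠] 0) := by
      refine tendsto_nhdsWithin_iff.2 ⟨?_, ?_⟩
      · exact (Complex.continuous_ofReal.tendsto' 0 0 (by simp)).mono_left nhdsWithin_le_nhds
      · filter_upwards [self_mem_nhdsWithin] with r hr
        simpa using hr
    exact ht.frequently (Eventually.frequently (Eventually.of_forall hreal))
  exact hA.eqOn_of_preconnected_of_frequently_eq hB hconv.isPreconnected
    (by simp; positivity) hfreq hl

def om : ℂ := Complex.exp ((4 * π / 9 : ℝ) * Complex.I)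
def zz : ℂ := Complex.exp ((-(π / 3) : ℝ) * Complex.I)

lemma zz_re : zz.re = 1 / 2 := by
  rw [zz, Complex.exp_ofReal_mul_I_re, Real.cos_neg, Real.cos_pi_div_three]

lemma om_re : 0 < om.re := by
  apply exp_re_pos
  simp only [Complex.mul_I_im, Complex.ofReal_re]
  rw [abs_of_pos (by positivity)]
  linarith [Real.pi_pos]

lemma norm_om : ‖om‖ = 1 := Complex.norm_exp_ofReal_mul_I _

lemma om_cube : om ^ 3 = zz ^ 2 := by
  rw [om, zz, ← Complex.exp_nat_mul, ← Complex.exp_nat_mul, Complex.exp_eq_exp_iff_exists_int]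
  refine ⟨1, ?_⟩
  push_cast
  ring

/-- the kernel `exp (-z w^{3/2})` -/
def kern (w : ℝ) : ℂ := Complex.exp (-zz * ((w ^ (3 / 2 : ℝ) : ℝ) : ℂ))

@[fun_prop] lemma kern_meas : Measurable kern := by unfold kern; fun_prop

lemma norm_ker (w : ℝ) : ‖kern w‖ = Real.exp (-(1/2) * w ^ (3/2 : ℝ)) := by
  rw [kern, norm_cexp_neg_mul, zz_re]

lemma moment (k : ℕ) : ∫ w in Ioi (0:ℝ), (w : ℂ) ^ k * kern w =
    (2 / 3) * (Real.Gamma (2 * ((k : ℝ) + 1) / 3) : ℂ) *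
      Complex.exp ((2 * π * (k + 1) / 9 : ℝ) * Complex.I) := by
  have ha : 0 < 2 * ((k : ℝ) + 1) / 3 := by positivity
  have h1 := LTr_rpow (2 * ((k : ℝ) + 1) / 3) ha (l := (-(π / 3) : ℝ) * Complex.I) (by
    simp only [Complex.mul_I_im, Complex.ofReal_re]
    rw [abs_neg, abs_of_pos (by positivity)]
    linarith [Real.pi_pos])
  rw [LTr, ← integral_comp_rpow_Ioi_of_pos (p := 3/2) (by norm_num)] at h1
  have h2 : ∀ w ∈ Ioi (0:ℝ), ((3/2 : ℝ) * w ^ ((3/2 : ℝ) - 1)) •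
      ((((w ^ (3/2:ℝ)) ^ (2 * ((k : ℝ) + 1) / 3 - 1) : ℝ) : ℂ) *
        Complex.exp (-Complex.exp ((-(π / 3) : ℝ) * Complex.I) * ((w ^ (3/2:ℝ) : ℝ) : ℂ))) =
      (3/2 : ℂ) * ((w : ℂ) ^ k * kern w) := by
    intro w hw
    have hw0 : (0:ℝ) < w := hw
    have : w ^ ((3/2 : ℝ) - 1) * (w ^ (3/2:ℝ)) ^ (2 * ((k : ℝ) + 1) / 3 - 1) = w ^ k := by
      rw [← Real.rpow_mul hw0.le, ← Real.rpow_add hw0, ← Real.rpow_natCast]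
      congr 1; ring
    have hc : ((w ^ ((3/2 : ℝ) - 1) : ℝ) : ℂ) *
      (((w ^ (3/2:ℝ)) ^ (2 * ((k : ℝ) + 1) / 3 - 1) : ℝ) : ℂ) = (w : ℂ) ^ k := by
      rw [← Complex.ofReal_mul, this]; push_cast; rfl
    rw [Complex.real_smul, Complex.ofReal_mul, kern, zz, ← hc]
    push_cast
    ring
  rw [setIntegral_congr_fun measurableSet_Ioi h2, integral_const_mul] at h1
  have h3 : Complex.exp ((2 * π * (k + 1) / 9 : ℝ) * Complex.I) =
      Complex.exp (-((2 * ((k : ℝ) + 1) / 3 : ℝ) : ℂ) * ((-(π / 3) : ℝ) * Complex.I)) := by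
    congr 1; push_cast; ring
  rw [h3, mul_assoc, ← h1]
  ring

/-- integrability of `exp (c w - w^{3/2}/2)` -/
lemma integrable_exp_ker (c : ℝ) (hc : 0 ≤ c) :
    IntegrableOn (fun w : ℝ => Real.exp (c * w) * Real.exp (-(1/2) * w ^ (3/2 : ℝ))) (Ioi 0) := by
  have h1 : IntegrableOn (fun w : ℝ => Real.exp (4 * (c + 1) ^ 3) * Real.exp (-1 * w)) (Ioi 0) := by
    apply Integrable.const_mul
    have := integrableOn_rpow_mul_exp_neg_mul_rpow (s := 0) (p := 1) (b := 1)
      (by norm_num) one_pos one_pos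
    simpa [IntegrableOn] using this
  refine Integrable.mono' h1 (by
    refine Measurable.aestronglyMeasurable ?_
    fun_prop) ?_
  refine (ae_restrict_iff' measurableSet_Ioi).2 (Eventually.of_forall fun w hw => ?_)
  have hw0 : (0:ℝ) < w := hw
  rw [Real.norm_of_nonneg (by positivity), ← Real.exp_add, ← Real.exp_add, Real.exp_le_exp]
  have h2 : w ^ (3/2 : ℝ) = w * √w := by
    rw [Real.sqrt_eq_rpow, ← Real.rpow_one_add' hw0.le (by norm_num)]; norm_num
  rw [h2]
  have hs := Real.sq_sqrt hw0.le
  set r := √w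
  have hr : 0 ≤ r := Real.sqrt_nonneg _
  rw [← hs]
  set d := c + 1
  have hd : 0 ≤ d := by positivity
  have hcd : c = d - 1 := by simp [d]
  rw [hcd]
  rcases le_total r (2 * d) with h | h
  · have : r ^ 2 ≤ (2 * d) ^ 2 := by gcongr
    nlinarith [mul_nonneg hd (sub_nonneg.2 this), mul_nonneg (sq_nonneg r) hr]
  · have : 0 ≤ r ^ 2 * (r - 2 * d) := mul_nonneg (sq_nonneg r) (by linarith)
    nlinarith [pow_nonneg hd 3]

lemma integrable_norm_ker : IntegrableOn (fun w : ℝ => Real.exp (-(1/2) * w ^ (3/2 : ℝ))) (Ioi 0) := by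
  simpa using integrable_exp_ker 0 le_rfl

lemma LTr_ker_hasSum (x : ℝ) : HasSum (fun k : ℕ => (-(x * om)) ^ k / (Nat.factorial k : ℂ) *
    ∫ w in Ioi (0:ℝ), (w : ℂ) ^ k * kern w) (LTr kern (x * om)) := by
  have key := hasSum_integral_of_dominated_convergence (μ := volume.restrict (Ioi (0:ℝ)))
    (F := fun (k : ℕ) (w : ℝ) => (-(x * om)) ^ k / (Nat.factorial k : ℂ) * ((w : ℂ) ^ k * kern w))
    (f := fun w => kern w * Complex.exp (-(x * om) * w))
    (fun k w => (|x| * |w|) ^ k / (Nat.factorial k : ℝ) * Real.exp (-(1/2) * w ^ (3/2 : ℝ)))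
    ?_ ?_ ?_ ?_ ?_
  · simp_rw [integral_const_mul] at key
    exact key
  · intro k
    have := kern_meas
    refine Measurable.aestronglyMeasurable ?_
    fun_prop
  · intro k
    refine Eventually.of_forall fun w => ?_
    rw [norm_mul, norm_mul, norm_div, norm_pow, norm_pow, norm_ker, norm_neg, norm_mul, norm_om]
    simp only [Complex.norm_real, Real.norm_eq_abs, Complex.norm_natCast, mul_one]
    apply le_of_eq
    rw [mul_pow]; ring
  · refine Eventually.of_forall fun w => ?_
    exact (Real.summable_pow_div_factorial _).mul_right _
  · have h1 : ∀ w : ℝ, ∑' k : ℕ, (|x| * |w|) ^ k / (Nat.factorial k : ℝ) *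
        Real.exp (-(1/2) * w ^ (3/2 : ℝ)) =
        Real.exp (|x| * |w|) * Real.exp (-(1/2) * w ^ (3/2 : ℝ)) := by
      intro w
      rw [tsum_mul_right, Real.exp_eq_exp_ℝ, NormedSpace.exp_eq_tsum_div]
    simp_rw [h1]
    refine (integrable_exp_ker |x| (abs_nonneg x)).congr_fun (fun w hw => ?_) measurableSet_Ioi
    have hw0 : (0:ℝ) < w := hw
    simp only [abs_of_pos hw0]
  · refine Eventually.of_forall fun w => ?_
    have h := (NormedSpace.expSeries_div_hasSum_exp (-(x * om) * (w:ℂ))).mul_left (kern w)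
    rw [← Complex.exp_eq_exp_ℂ] at h
    have e : (fun k : ℕ => (-(x * om)) ^ k / (Nat.factorial k : ℂ) * ((w : ℂ) ^ k * kern w)) =
        fun k : ℕ => kern w * ((-(x * om) * (w:ℂ)) ^ k / (Nat.factorial k : ℂ)) := by
      funext k
      rw [mul_pow]; ring
    rw [e]
    exact h

lemma ml_eq (x : ℝ) : mittagLeffler23 x = 3 / (2 * π) * (om * LTr kern (x * om)).im := by
  have h := ((LTr_ker_hasSum x).mul_left om)
  have h' := Complex.hasSum_im h
  have h2 : ∀ k : ℕ, (om * ((-(x * om)) ^ k / (Nat.factorial k : ℂ) *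
      ∫ w in Ioi (0:ℝ), (w : ℂ) ^ k * kern w)).im =
      2 / 3 * ((Real.sin (2 * π * ((k : ℝ) + 1) / 3) * Real.Gamma (2 * ((k : ℝ) + 1) / 3) /
      (Nat.factorial k : ℝ)) * (-x) ^ k) := by
    intro k
    rw [moment]
    have e1 : om ^ (k + 1) * Complex.exp ((2 * π * (k + 1) / 9 : ℝ) * Complex.I) =
        Complex.exp ((2 * π * ((k : ℝ) + 1) / 3 : ℝ) * Complex.I) := by
      rw [om, ← Complex.exp_nat_mul, ← Complex.exp_add]
      congr 1; push_cast; ring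
    have e2 : om * ((-(x * om)) ^ k / (Nat.factorial k : ℂ) *
      ((2 / 3) * (Real.Gamma (2 * ((k : ℝ) + 1) / 3) : ℂ) *
      Complex.exp ((2 * π * (k + 1) / 9 : ℝ) * Complex.I))) =
      ((2 / 3 * (Real.Gamma (2 * ((k : ℝ) + 1) / 3) / (Nat.factorial k : ℝ) * (-x) ^ k) : ℝ) : ℂ) *
        Complex.exp ((2 * π * ((k : ℝ) + 1) / 3 : ℝ) * Complex.I) := by
      rw [← e1]
      have : (-(x * om)) ^ k = (-(x:ℂ)) ^ k * om ^ k := by rw [← mul_pow]; congr 1; ring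
      rw [this]
      push_cast
      ring
    rw [e2, Complex.im_ofReal_mul, Complex.exp_ofReal_mul_I_im]
    ring
  simp_rw [h2] at h'
  have h3 := h'.tsum_eq
  rw [tsum_mul_left] at h3
  rw [← h3, mittagLeffler23]
  field_simp

lemma LTr_ker_bound {s : ℂ} (hs : 0 ≤ s.re) :
    ‖LTr kern s‖ ≤ ∫ w in Ioi (0:ℝ), Real.exp (-(1/2) * w ^ (3/2 : ℝ)) := by
  refine norm_integral_le_of_norm_le integrable_norm_ker ?_
  refine (ae_restrict_iff' measurableSet_Ioi).2 (Eventually.of_forall fun w hw => ?_)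
  have hw0 : (0:ℝ) < w := hw
  rw [norm_mul, norm_ker, norm_cexp_neg_mul]
  have : Real.exp (-s.re * w) ≤ 1 := by
    rw [Real.exp_le_one_iff]; nlinarith
  exact mul_le_of_le_one_right (Real.exp_pos _).le this

lemma ml_bound : ∃ B : ℝ, 0 ≤ B ∧ ∀ x : ℝ, 0 ≤ x → |mittagLeffler23 x| ≤ B := by
  refine ⟨3 / (2 * π) * ∫ w in Ioi (0:ℝ), Real.exp (-(1/2) * w ^ (3/2 : ℝ)), ?_, fun x hx => ?_⟩
  · have : 0 ≤ ∫ w in Ioi (0:ℝ), Real.exp (-(1/2) * w ^ (3/2 : ℝ)) :=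
      integral_nonneg fun w => (Real.exp_pos _).le
    positivity
  · rw [ml_eq, abs_mul, abs_of_pos (by positivity : 0 < 3 / (2 * π))]
    gcongr
    refine (Complex.abs_im_le_norm _).trans ?_
    rw [norm_mul, norm_om, one_mul]
    apply LTr_ker_bound
    rw [Complex.re_ofReal_mul]
    exact mul_nonneg hx om_re.le

lemma ml_meas : Measurable mittagLeffler23 := by
  have h : Measurable fun x : ℝ => LTr kern (x * om) := by
    have : StronglyMeasurable (Function.uncurry fun (x w : ℝ) =>
        kern w * Complex.exp (-(x * om) * w)) := by
      refine Measurable.stronglyMeasurable ?_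
      have := kern_meas
      unfold Function.uncurry
      fun_prop
    exact (this.integral_prod_right (ν := volume.restrict (Ioi (0:ℝ)))).measurable
  rw [funext ml_eq]
  fun_prop

def hh (w : ℝ) : ℂ := (1 + zz * ((w ^ (3 / 2 : ℝ) : ℝ) : ℂ))⁻¹

@[fun_prop] lemma hh_meas : Measurable hh := by unfold hh; fun_prop

lemma den_re (w : ℝ) : (1 + zz * ((w ^ (3 / 2 : ℝ) : ℝ) : ℂ)).re = 1 + w ^ (3/2 : ℝ) / 2 := by
  rw [Complex.add_re, Complex.re_mul_ofReal, zz_re]; simp; ring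

lemma den_ne (w : ℝ) (hw : 0 < w) : (1 + zz * ((w ^ (3 / 2 : ℝ) : ℝ) : ℂ)) ≠ 0 := by
  intro h
  have := den_re w
  rw [h] at this
  have h2 : 0 < w ^ (3/2 : ℝ) := by positivity
  simp at this
  linarith

lemma norm_hh_le (w : ℝ) (hw : 0 < w) : ‖hh w‖ ≤ (1 + w ^ (3/2 : ℝ) / 2)⁻¹ := by
  rw [hh, norm_inv]
  have h2 : 0 < w ^ (3/2 : ℝ) := by positivity
  gcongr
  rw [← den_re]
  exact Complex.re_le_norm _

lemma integrable_den : IntegrableOn (fun w : ℝ => (1 + w ^ (3/2 : ℝ) / 2)⁻¹) (Ioi 0) := by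
  have h1 : Integrable (fun w : ℝ => 4 * (1 + ‖w‖) ^ (-(3/2 : ℝ))) :=
    (integrable_one_add_norm (by simp; norm_num)).const_mul 4
  refine Integrable.mono' h1.integrableOn (Measurable.aestronglyMeasurable (by fun_prop)) ?_
  refine (ae_restrict_iff' measurableSet_Ioi).2 (Eventually.of_forall fun w hw => ?_)
  have hw0 : (0:ℝ) < w := hw
  have h2 : 0 < w ^ (3/2 : ℝ) := by positivity
  have h3 : (0:ℝ) < (1 + w) ^ (3/2 : ℝ) := by positivity
  rw [Real.norm_of_nonneg (by positivity), Real.norm_of_nonneg hw0.le,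
    Real.rpow_neg (by positivity)]
  have h4 : (1 + w) ^ (3/2 : ℝ) ≤ 4 * (1 + w ^ (3/2 : ℝ) / 2) := by
    have h5 : (2:ℝ) ^ (3/2 : ℝ) ≤ 4 := by
      calc (2:ℝ) ^ (3/2 : ℝ) ≤ 2 ^ (2:ℝ) := by
            apply Real.rpow_le_rpow_of_exponent_le <;> norm_num
        _ = 4 := by norm_num
    have h8 : (2:ℝ) ^ (3/2 : ℝ) ≤ 3 := by
      have : ((2:ℝ) ^ (3/2 : ℝ)) ^ 2 = 8 := by
        rw [← Real.rpow_natCast, ← Real.rpow_mul (by norm_num)]; norm_num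
      have : 0 < (2:ℝ) ^ (3/2 : ℝ) := by positivity
      nlinarith
    have hconv : (1 + w) ^ (3/2 : ℝ) ≤ 2 * (1 + w ^ (3/2 : ℝ)) := by
      have hc := (convexOn_rpow (by norm_num : (1:ℝ) ≤ 3/2)).2 (mem_Ici.2 zero_le_one)
        (mem_Ici.2 hw0.le) (by norm_num : (0:ℝ) ≤ 1/2) (by norm_num : (0:ℝ) ≤ 1/2) (by norm_num)
      simp only [smul_eq_mul, Real.one_rpow] at hc
      have e : 1 + w = 2 * (1/2 * 1 + 1/2 * w) := by ring
      rw [e, Real.mul_rpow (by norm_num) (by positivity)]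
      have h9 : 0 ≤ (1/2 * 1 + 1/2 * w) ^ (3/2 : ℝ) := by positivity
      nlinarith
    linarith
  rw [inv_eq_one_div, ← div_eq_mul_inv, div_le_div_iff₀ (by positivity) h3]
  linarith

/-- the two-variable kernel -/
def Phi (y : ℝ) (q : ℝ × ℝ) : ℂ :=
  Complex.exp (-(1 + zz * ((q.2 ^ (3 / 2 : ℝ) : ℝ) : ℂ)) * q.1) * Complex.exp (-(y * om) * q.2)

lemma Phi_meas (y : ℝ) : Measurable (Phi y) := by unfold Phi; fun_prop

lemma norm_Phi (y : ℝ) (t w : ℝ) : ‖Phi y (t, w)‖ =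
    Real.exp (-(1 + w ^ (3/2 : ℝ) / 2) * t) * Real.exp (-(y * om.re) * w) := by
  rw [Phi, norm_mul, norm_cexp_neg_mul, norm_cexp_neg_mul, den_re, Complex.re_ofReal_mul]

lemma Phi_int (y : ℝ) (w : ℝ) (hw : 0 < w) :
    IntegrableOn (fun t => Phi y (t, w)) (Ioi 0) ∧
    ∫ t in Ioi (0:ℝ), Phi y (t, w) = hh w * Complex.exp (-(y * om) * w) := by
  have hre : (-(1 + zz * ((w ^ (3 / 2 : ℝ) : ℝ) : ℂ))).re < 0 := by
    rw [Complex.neg_re, den_re]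
    have h2 : 0 < w ^ (3/2 : ℝ) := by positivity
    linarith
  constructor
  · have := (integrableOn_exp_mul_complex_Ioi hre 0).mul_const (Complex.exp (-(y * om) * w))
    exact this
  · have h := integral_exp_mul_complex_Ioi hre 0
    simp only [Phi]
    rw [integral_mul_const, h, hh]
    simp only [Complex.ofReal_zero, mul_zero, Complex.exp_zero]
    rw [neg_div_neg_eq, one_div]

lemma Phi_integrable (y : ℝ) (hy : 0 ≤ y) : Integrable (Phi y)
    ((volume.restrict (Ioi (0:ℝ))).prod (volume.restrict (Ioi (0:ℝ)))) := by
  rw [integrable_prod_iff' (Phi_meas y).aestronglyMeasurable]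
  constructor
  · refine (ae_restrict_iff' measurableSet_Ioi).2 (Eventually.of_forall fun w hw => ?_)
    exact (Phi_int y w hw).1
  · refine Integrable.mono' integrable_den ?_ ?_
    · exact ((Phi_meas y).norm.stronglyMeasurable.integral_prod_left
        (μ := volume.restrict (Ioi (0:ℝ)))).aestronglyMeasurable
    · refine (ae_restrict_iff' measurableSet_Ioi).2 (Eventually.of_forall fun w hw => ?_)
      have hw0 : (0:ℝ) < w := hw
      rw [Real.norm_of_nonneg (integral_nonneg fun _ => norm_nonneg _)]
      simp_rw [norm_Phi]
      have h2 : 0 < w ^ (3/2 : ℝ) := by positivity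
      rw [integral_mul_const, integral_exp_mul_Ioi (by linarith)]
      simp only [mul_zero, Real.exp_zero, neg_div_neg_eq, one_div]
      apply mul_le_of_le_one_right (by positivity)
      rw [Real.exp_le_one_iff]
      have := mul_nonneg (mul_nonneg hy om_re.le) hw0.le
      linarith

lemma scale (y t : ℝ) (ht : 0 < t) :
    ∫ w in Ioi (0:ℝ), Phi y (t, w) =
      ((Real.exp (-t) * t ^ (-(2:ℝ)/3) : ℝ) : ℂ) * LTr kern ((t ^ (-(2:ℝ)/3) * y : ℝ) * om) := by
  have hb : 0 < t ^ ((2:ℝ)/3) := by positivity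
  have h := integral_comp_mul_left_Ioi (fun w : ℝ => kern w *
    Complex.exp (-((t ^ (-(2:ℝ)/3) * y : ℝ) * om) * w)) 0 hb
  have hinv : (t ^ ((2:ℝ)/3))⁻¹ = t ^ (-(2:ℝ)/3) := by
    rw [← Real.rpow_neg ht.le]; congr 1; ring
  rw [mul_zero, hinv] at h
  rw [Complex.ofReal_mul, mul_assoc, LTr, ← Complex.real_smul (x := t ^ (-(2:ℝ)/3)), ← h,
    ← integral_const_mul]
  refine setIntegral_congr_fun measurableSet_Ioi fun w hw => ?_
  have hw0 : (0:ℝ) < w := hw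
  have e1 : (t ^ ((2:ℝ)/3) * w) ^ (3/2 : ℝ) = t * w ^ (3/2 : ℝ) := by
    rw [Real.mul_rpow hb.le hw0.le, ← Real.rpow_mul ht.le]; norm_num
  have e2 : t ^ (-(2:ℝ)/3) * t ^ ((2:ℝ)/3) = 1 := by
    rw [← Real.rpow_add ht]; norm_num
  have e2c : ((t ^ (-(2:ℝ)/3) : ℝ) : ℂ) * ((t ^ ((2:ℝ)/3) : ℝ) : ℂ) = 1 := by
    rw [← Complex.ofReal_mul, e2]; simp
  simp only [Phi, kern]
  rw [e1, Complex.ofReal_exp, ← Complex.exp_add, ← Complex.exp_add, ← Complex.exp_add]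
  congr 1
  simp only [Complex.ofReal_mul, Complex.ofReal_neg]
  linear_combination (y * om * w : ℂ) * e2c

lemma G_form (y : ℝ) (hy : 0 ≤ y) :
    ∫ t in Ioi (0:ℝ), Real.exp (-t) * t ^ (-(2:ℝ)/3) * mittagLeffler23 (t ^ (-(2:ℝ)/3) * y) =
      3 / (2 * π) * (om * LTr hh (y * om)).im := by
  have h1 : ∫ t in Ioi (0:ℝ), Real.exp (-t) * t ^ (-(2:ℝ)/3) *
      mittagLeffler23 (t ^ (-(2:ℝ)/3) * y) =
      ∫ t in Ioi (0:ℝ), 3 / (2 * π) * Complex.imCLM (om * ∫ w in Ioi (0:ℝ), Phi y (t, w)) := by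
    refine setIntegral_congr_fun measurableSet_Ioi fun t ht => ?_
    rw [scale y t ht, ml_eq]
    simp only [Complex.imCLM_apply]
    rw [mul_left_comm om, Complex.im_ofReal_mul]
    ring
  have hPhiInt := (Phi_integrable y hy).integral_prod_left
  have hswap := integral_integral_swap (f := fun t w => Phi y (t, w)) (Phi_integrable y hy)
  rw [h1, integral_const_mul, ContinuousLinearMap.integral_comp_comm _ (hPhiInt.const_mul om),
    integral_const_mul, hswap]
  rw [setIntegral_congr_fun measurableSet_Ioi fun w hw => (Phi_int y w hw).2]
  rfl

lemma ode_const (f f' : ℝ → ℂ) (h : ∀ y, 0 < y → HasDerivAt f (f' y) y) (h0 : ∀ y, 0 < y → f' y = 0)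
    (a b : ℝ) (ha : 0 < a) (hb : 0 < b) : f a = f b :=
  isOpen_Ioi.is_const_of_deriv_eq_zero isPreconnected_Ioi
    (fun y hy => (h y hy).differentiableAt.differentiableWithinAt)
    (fun y hy => by rw [(h y hy).deriv, h0 y hy]; rfl) (mem_Ioi.2 ha) (mem_Ioi.2 hb)

/-- `f' = m f` on the half line -/
lemma ode_exp (m : ℂ) (f : ℝ → ℂ) (h : ∀ y, 0 < y → HasDerivAt f (m * f y) y)
    (a b : ℝ) (ha : 0 < a) (hb : 0 < b) : f b = Complex.exp (m * (b - a)) * f a := by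
  have hd : ∀ y : ℝ, HasDerivAt (fun y : ℝ => Complex.exp (-m * y)) (Complex.exp (-m * y) * -m) y := by
    intro y
    have h1 : HasDerivAt (fun y : ℝ => -m * (y:ℂ)) (-m) y := by
      simpa using (Complex.ofRealCLM.hasDerivAt (x := y)).const_mul (-m)
    exact h1.cexp
  have := ode_const (fun y => Complex.exp (-m * y) * f y) _
    (fun y hy => (hd y).mul (h y hy)) (fun y _ => by ring) a b ha hb
  have e : Complex.exp (m * (b - a)) = Complex.exp (m * b) * Complex.exp (-m * a) := by
    rw [← Complex.exp_add]; ring_nf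
  rw [e, mul_assoc, this, ← mul_assoc, ← Complex.exp_add]
  simp

lemma ode_third (G G1 G2 : ℝ → ℝ) (h0 : ∀ y, 0 < y → HasDerivAt G (G1 y) y)
    (h1 : ∀ y, 0 < y → HasDerivAt G1 (G2 y) y) (h2 : ∀ y, 0 < y → HasDerivAt G2 (-G y) y)
    (B : ℝ) (hB : ∀ y, 0 < y → |G y| ≤ B) (hlim : Tendsto G (𝓝[>] 0) (𝓝 1)) :
    ∀ y, 0 < y → G y = Real.exp (-y) := by
  -- first factor
  obtain ⟨k, hk⟩ : ∃ k : ℝ, ∀ y, 0 < y → G2 y - G1 y + G y = 3 * k * Real.exp (-y) := by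
    refine ⟨(G2 1 - G1 1 + G 1) * Real.exp 1 / 3, fun y hy => ?_⟩
    have := ode_exp (-1) (fun y => ((G2 y - G1 y + G y : ℝ) : ℂ)) (fun y hy => by
      have := (((h2 y hy).sub (h1 y hy)).add (h0 y hy)).ofReal_comp
      have e : (-1 : ℂ) * ((G2 y - G1 y + G y : ℝ) : ℂ) = ((-G y - G2 y + G1 y : ℝ) : ℂ) := by
        push_cast; ring
      rw [e]; exact this) 1 y one_pos hy
    have e : Complex.exp (-1 * ((y:ℂ) - (1:ℝ))) = ((Real.exp (-y) * Real.exp 1 : ℝ) : ℂ) := by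
      rw [← Real.exp_add, Complex.ofReal_exp]; congr 1; push_cast; ring
    rw [e, ← Complex.ofReal_mul, Complex.ofReal_inj] at this
    rw [this]; ring
  have hexp : ∀ y : ℝ, HasDerivAt (fun y => Real.exp (-y)) (-Real.exp (-y)) y := by
    intro y
    simpa using (hasDerivAt_neg y).exp
  set L : ℝ → ℝ := fun y => G y - k * Real.exp (-y) with hL
  set L1 : ℝ → ℝ := fun y => G1 y + k * Real.exp (-y) with hL1
  have hL0 : ∀ y, 0 < y → HasDerivAt L (L1 y) y := fun y hy => by
    have := (h0 y hy).sub ((hexp y).const_mul k)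
    have e : L1 y = G1 y - k * -Real.exp (-y) := by simp [hL1]
    rw [e]; exact this
  have hL1' : ∀ y, 0 < y → HasDerivAt L1 (L1 y - L y) y := fun y hy => by
    have := (h1 y hy).add ((hexp y).const_mul k)
    have e : L1 y - L y = G2 y + k * -Real.exp (-y) := by
      have := hk y hy
      simp only [hL1, hL]; linarith
    rw [e]; exact this
  set β : ℝ := √3 / 2 with hβ
  have hβpos : 0 < β := by positivity
  have hβ2 : β ^ 2 = 3 / 4 := by
    rw [hβ, div_pow, Real.sq_sqrt (by norm_num)]; norm_num
  set M : ℝ → ℂ := fun y => ((L1 y - L y / 2 : ℝ) : ℂ) + ((β * L y : ℝ) : ℂ) * Complex.I with hM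
  have hMd : ∀ y, 0 < y → HasDerivAt M ((1/2 + β * Complex.I) * M y) y := by
    intro y hy
    have a1 := ((hL1' y hy).sub ((hL0 y hy).div_const 2)).ofReal_comp
    have a2 := (((hL0 y hy).const_mul β).ofReal_comp).mul_const Complex.I
    have a3 := a1.add a2
    have e : (1/2 + β * Complex.I) * M y = ((L1 y - L y - L1 y / 2 : ℝ) : ℂ) +
        ((β * L1 y : ℝ) : ℂ) * Complex.I := by
      have hβc : (β : ℂ) ^ 2 = 3 / 4 := by rw [← Complex.ofReal_pow, hβ2]; norm_num
      simp only [hM]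
      push_cast
      linear_combination (β : ℂ) ^ 2 * L y * Complex.I_sq - (L y : ℂ) * hβc
    rw [e]; exact a3
  have hLz : ∀ y, 0 < y → L y = 0 := by
    intro y hy
    set T := π / β with hT
    have hTpos : 0 < T := by positivity
    have hMn : ∀ n : ℕ, |L (y + n * T)| = Real.exp (n * T / 2) * |L y| := by
      intro n
      have hn : 0 < y + n * T := by positivity
      have h := ode_exp _ M hMd y (y + n * T) hy hn
      have e : Complex.exp ((1/2 + β * Complex.I) * (((y + n * T : ℝ) : ℂ) - y)) =
          ((Real.exp (n * T / 2) * (-1) ^ n : ℝ) : ℂ) := by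
        have : (1/2 + β * Complex.I) * (((y + n * T : ℝ) : ℂ) - y) =
            ((n * T / 2 : ℝ) : ℂ) + n * (π * Complex.I) := by
          have hTβ : (T : ℂ) * β = π := by
            rw [← Complex.ofReal_mul, hT, div_mul_cancel₀ _ hβpos.ne']
          push_cast
          linear_combination (n : ℂ) * Complex.I * hTβ
        rw [this, Complex.exp_add, Complex.exp_nat_mul, Complex.exp_pi_mul_I]
        push_cast; rfl
      rw [e] at h
      have h' := congrArg Complex.im h
      rw [Complex.im_ofReal_mul] at h'
      simp only [hM, Complex.add_im, Complex.ofReal_im, Complex.mul_I_im, Complex.ofReal_re,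
        zero_add] at h'
      have h'' : L (y + n * T) = Real.exp (n * T / 2) * (-1) ^ n * L y := by
        apply mul_left_cancel₀ hβpos.ne'
        rw [h']; ring
      rw [h'', abs_mul, abs_mul, abs_pow, abs_neg, abs_one, one_pow, mul_one,
        abs_of_pos (Real.exp_pos _)]
    by_contra hne
    have hpos : 0 < |L y| := abs_pos.2 hne
    have hLB : ∀ y, 0 < y → |L y| ≤ B + |k| := by
      intro y hy
      calc |L y| ≤ |G y| + |k * Real.exp (-y)| := abs_sub _ _
        _ ≤ B + |k| := by
          rw [abs_mul, abs_of_pos (Real.exp_pos _)]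
          have : Real.exp (-y) ≤ 1 := by rw [Real.exp_le_one_iff]; linarith
          have := mul_le_of_le_one_right (abs_nonneg k) this
          linarith [hB y hy]
    obtain ⟨n, hn⟩ := exists_nat_gt ((B + |k|) / |L y| / (T / 2))
    have c1 := hLB (y + n * T) (by positivity)
    rw [hMn] at c1
    rw [div_lt_iff₀ (by positivity), div_lt_iff₀ hpos] at hn
    have c2 := Real.add_one_le_exp (n * T / 2)
    nlinarith
  have hG : ∀ y, 0 < y → G y = k * Real.exp (-y) := fun y hy => by
    have := hLz y hy
    simp only [hL] at this
    linarith
  have hlim2 : Tendsto G (𝓝[>] 0) (𝓝 (k * Real.exp (-0))) := by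
    have hc : Continuous fun y : ℝ => k * Real.exp (-y) := by fun_prop
    refine ((hc.tendsto 0).mono_left nhdsWithin_le_nhds).congr' ?_
    filter_upwards [self_mem_nhdsWithin] with y hy
    exact (hG y hy).symm
  have hk1 : k = 1 := by
    have := tendsto_nhds_unique hlim2 hlim
    simpa using this
  intro y hy
  rw [hG y hy, hk1, one_mul]

lemma hh_LInt : LInt hh := by
  refine LInt.of_bound hh_meas 0 (by norm_num) fun w hw => ?_
  have h2 : 0 < w ^ (3/2 : ℝ) := by positivity
  refine (norm_hh_le w hw).trans ?_
  rw [Real.rpow_zero]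
  exact inv_le_one_of_one_le₀ (by linarith)

lemma om_mul_re (y : ℝ) (hy : 0 < y) : 0 < ((y : ℂ) * om).re := by
  rw [Complex.re_ofReal_mul]; exact mul_pos hy om_re

lemma deriv_im (c : ℂ) {g : ℝ → ℂ} (hg : LInt g) (y : ℝ) (hy : 0 < y) :
    HasDerivAt (fun y : ℝ => (c * LTr g (y * om)).im)
      ((-(c * om) * LTr (fun w => (w:ℂ) * g w) (y * om)).im) y := by
  have h1 : HasDerivAt (fun s : ℂ => LTr g (s * om))
      (-LTr (fun w => (w:ℂ) * g w) (y * om) * om) (y : ℂ) := by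
    have h2 : HasDerivAt (fun s : ℂ => s * om) om (y:ℂ) := by
      simpa using (hasDerivAt_id (y:ℂ)).mul_const om
    exact (LTr_hasDerivAt hg (om_mul_re y hy)).comp (y:ℂ) h2
  have h3 := (h1.const_mul c).comp_ofReal
  have h4 := Complex.imCLM.hasFDerivAt.comp_hasDerivAt y h3
  have e : -(c * om) * LTr (fun w => (w:ℂ) * g w) (y * om) =
    c * (-LTr (fun w => (w:ℂ) * g w) (y * om) * om) := by ring
  rw [e]
  exact h4

lemma third_eq (y : ℝ) (hy : 0 < y) :
    (-(om ^ 3 * om) * LTr (fun w => (w:ℂ) * ((w:ℂ) * ((w:ℂ) * hh w))) (y * om)).im =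
      -(om * LTr hh (y * om)).im := by
  have hs := om_mul_re y hy
  have hl : (y : ℂ) * om = Complex.exp ((Real.log y : ℝ) + (4 * π / 9 : ℝ) * Complex.I) := by
    rw [Complex.exp_add, ← Complex.ofReal_exp, Real.exp_log hy, om]
  have hlim : |((Real.log y : ℝ) + (4 * π / 9 : ℝ) * Complex.I).im| < π / 2 := by
    simp only [Complex.add_im, Complex.ofReal_im, Complex.mul_I_im, Complex.ofReal_re, zero_add]
    rw [abs_of_pos (by positivity)]
    linarith [Real.pi_pos]
  have r1 := LTr_rpow 1 one_pos hlim
  have r2 := LTr_rpow (5/2) (by norm_num) hlim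
  rw [← hl] at r1 r2
  have i1 := (LInt_rpow (1 - 1) (by norm_num)).integrable hs
  have i2 := (LInt_rpow (5/2 - 1) (by norm_num)).integrable hs
  have i0 := hh_LInt.integrable hs
  have i3 := hh_LInt.mul_id.mul_id.mul_id.integrable hs
  have key : LTr hh (y * om) - zz ^ 2 * LTr (fun w => (w:ℂ) * ((w:ℂ) * ((w:ℂ) * hh w))) (y * om) =
      LTr (fun w => ((w ^ ((1:ℝ) - 1) : ℝ) : ℂ)) (y * om) -
        zz * LTr (fun w => ((w ^ ((5/2:ℝ) - 1) : ℝ) : ℂ)) (y * om) := by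
    unfold LTr
    rw [← integral_const_mul, ← integral_const_mul, ← integral_sub i0 (i3.const_mul _),
      ← integral_sub i1 (i2.const_mul _)]
    refine setIntegral_congr_fun measurableSet_Ioi fun w hw => ?_
    have hw0 : (0:ℝ) < w := hw
    have hne := den_ne w hw0
    have e1 : (5/2 - 1 : ℝ) = 3/2 := by norm_num
    have e3 : (w : ℂ) ^ 3 = (((w ^ (3/2 : ℝ) : ℝ)) : ℂ) ^ 2 := by
      rw [← Complex.ofReal_pow, ← Complex.ofReal_pow, ← Real.rpow_natCast, ← Real.rpow_natCast,
        ← Real.rpow_mul hw0.le]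
      norm_num
    simp only [e1, sub_self, Real.rpow_zero, Complex.ofReal_one, hh]
    set r : ℂ := ((w ^ (3/2 : ℝ) : ℝ) : ℂ)
    have e4 : (w:ℂ) * ((w:ℂ) * ((w:ℂ) * (1 + zz * r)⁻¹)) = r ^ 2 * (1 + zz * r)⁻¹ := by
      rw [← e3]; ring
    rw [e4]
    field_simp
    ring
  have e : -(om ^ 3 * om) * LTr (fun w => (w:ℂ) * ((w:ℂ) * ((w:ℂ) * hh w))) (y * om) =
      om * (LTr hh (y * om) - zz ^ 2 * LTr (fun w => (w:ℂ) * ((w:ℂ) * ((w:ℂ) * hh w))) (y * om))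
      - om * LTr hh (y * om) := by
    rw [om_cube]; ring
  rw [e, key, r1, r2, Complex.sub_im]
  have f1 : om * Complex.exp (-((1:ℝ):ℂ) * ((Real.log y : ℝ) + (4 * π / 9 : ℝ) * Complex.I)) =
      ((Real.exp (-Real.log y) : ℝ) : ℂ) := by
    rw [om, ← Complex.exp_add, Complex.ofReal_exp]; congr 1; push_cast; ring
  have f2 : om * zz * Complex.exp (-((5/2:ℝ):ℂ) * ((Real.log y : ℝ) + (4 * π / 9 : ℝ) * Complex.I)) =
      ((-Real.exp (-(5/2) * Real.log y) : ℝ) : ℂ) := by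
    have e5 : ((-Real.exp (-(5/2) * Real.log y) : ℝ) : ℂ) =
        Complex.exp (-π * Complex.I) * Complex.exp ((-(5/2) * Real.log y : ℝ) : ℂ) := by
      have e6 : Complex.exp (-(π:ℂ) * Complex.I) = -1 := by
        rw [neg_mul, Complex.exp_neg, Complex.exp_pi_mul_I]; norm_num
      rw [e6, Complex.ofReal_neg, Complex.ofReal_exp, neg_one_mul]
    rw [e5, om, zz, ← Complex.exp_add, ← Complex.exp_add, ← Complex.exp_add]
    congr 1; push_cast; ring
  have f3 : om * ((Real.Gamma 1 : ℂ) *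
      Complex.exp (-((1:ℝ):ℂ) * ((Real.log y : ℝ) + (4 * π / 9 : ℝ) * Complex.I)) -
      zz * ((Real.Gamma (5/2) : ℂ) *
      Complex.exp (-((5/2:ℝ):ℂ) * ((Real.log y : ℝ) + (4 * π / 9 : ℝ) * Complex.I)))) =
      ((Real.Gamma 1 * Real.exp (-Real.log y) -
        Real.Gamma (5/2) * (-Real.exp (-(5/2) * Real.log y)) : ℝ) : ℂ) := by
    rw [Complex.ofReal_sub, Complex.ofReal_mul, Complex.ofReal_mul, ← f1, ← f2]; ring
  rw [f3, Complex.ofReal_im, zero_sub]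

lemma ml_zero : mittagLeffler23 0 = (1 / π) * (Real.sin (2 * π / 3) * Real.Gamma (2 / 3)) := by
  rw [mittagLeffler23, tsum_eq_single 0]
  · simp
  · intro k hk; simp [hk]

lemma int_gamma : ∫ t in Ioi (0:ℝ), Real.exp (-t) * t ^ (-(2:ℝ)/3) = Real.Gamma (1/3) := by
  rw [Real.Gamma_eq_integral (by norm_num)]
  norm_num

lemma integrable_gamma : IntegrableOn (fun t : ℝ => Real.exp (-t) * t ^ (-(2:ℝ)/3)) (Ioi 0) := by
  have := Real.GammaIntegral_convergent (s := 1/3) (by norm_num)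
  norm_num at this
  convert this using 3
  norm_num

lemma ml_laplace_zero : ∫ t in Ioi (0:ℝ), Real.exp (-t) * t ^ (-(2:ℝ)/3) *
    mittagLeffler23 (t ^ (-(2:ℝ)/3) * 0) = 1 := by
  simp_rw [mul_zero]
  rw [integral_mul_const, int_gamma, ml_zero]
  have h := Real.Gamma_mul_Gamma_one_sub (1/3)
  have e : (1 - 1/3 : ℝ) = 2/3 := by norm_num
  have e2 : Real.sin (2 * π / 3) = Real.sin (π * (1/3)) := by
    rw [← Real.sin_pi_sub]; congr 1; ring
  rw [e] at h
  have hs : 0 < Real.sin (π * (1/3)) :=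
    Real.sin_pos_of_pos_of_lt_pi (by positivity) (by linarith [Real.pi_pos])
  rw [e2]
  calc Real.Gamma (1/3) * (1 / π * (Real.sin (π * (1/3)) * Real.Gamma (2/3)))
      = (Real.Gamma (1/3) * Real.Gamma (2/3)) * Real.sin (π * (1/3)) / π := by ring
    _ = 1 := by rw [h]; field_simp

lemma ml_integrable (y : ℝ) (hy : 0 ≤ y) : IntegrableOn (fun t : ℝ =>
    Real.exp (-t) * t ^ (-(2:ℝ)/3) * mittagLeffler23 (t ^ (-(2:ℝ)/3) * y)) (Ioi 0) := by
  obtain ⟨B, hB0, hB⟩ := ml_bound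
  refine Integrable.mono' (integrable_gamma.mul_const B) ?_ ?_
  · have := ml_meas
    exact Measurable.aestronglyMeasurable (by fun_prop)
  · refine (ae_restrict_iff' measurableSet_Ioi).2 (Eventually.of_forall fun t ht => ?_)
    have ht0 : (0:ℝ) < t := ht
    rw [norm_mul, Real.norm_of_nonneg (by positivity), Real.norm_eq_abs]
    gcongr
    exact hB _ (by positivity)

lemma ml_int_norm_le (B : ℝ) (hB : ∀ x : ℝ, 0 ≤ x → |mittagLeffler23 x| ≤ B) (y : ℝ) (hy : 0 ≤ y) :
    ∫ t in Ioi (0:ℝ), ‖Real.exp (-t) * t ^ (-(2:ℝ)/3) * mittagLeffler23 (t ^ (-(2:ℝ)/3) * y)‖ ≤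
      Real.Gamma (1/3) * B := by
  rw [← int_gamma, ← integral_mul_const]
  refine setIntegral_mono_on (ml_integrable y hy).norm (integrable_gamma.mul_const B)
    measurableSet_Ioi fun t ht => ?_
  have ht0 : (0:ℝ) < t := ht
  rw [norm_mul, Real.norm_of_nonneg (by positivity), Real.norm_eq_abs]
  gcongr
  exact hB _ (by positivity)

lemma ml_laplace (y : ℝ) (hy : 0 ≤ y) : ∫ t in Ioi (0:ℝ), Real.exp (-t) * t ^ (-(2:ℝ)/3) *
    mittagLeffler23 (t ^ (-(2:ℝ)/3) * y) = Real.exp (-y) := by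
  rcases hy.eq_or_lt with h | hy
  · rw [← h, ml_laplace_zero]; simp
  obtain ⟨B, hB0, hB⟩ := ml_bound
  rw [G_form y hy.le]
  refine ode_third (fun y => 3 / (2 * π) * (om * LTr hh (y * om)).im)
    (fun y => 3 / (2 * π) * (-(om * om) * LTr (fun w => (w:ℂ) * hh w) (y * om)).im)
    (fun y => 3 / (2 * π) * (om ^ 3 * LTr (fun w => (w:ℂ) * ((w:ℂ) * hh w)) (y * om)).im)
    ?_ ?_ ?_ (Real.Gamma (1/3) * B) ?_ ?_ y hy
  · exact fun y hy => (deriv_im om hh_LInt y hy).const_mul _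
  · intro y hy
    have := (deriv_im (-(om * om)) hh_LInt.mul_id y hy).const_mul (3 / (2 * π))
    have e : -(-(om * om) * om) = om ^ 3 := by ring
    rw [e] at this
    exact this
  · intro y hy
    have := (deriv_im (om ^ 3) hh_LInt.mul_id.mul_id y hy).const_mul (3 / (2 * π))
    rw [third_eq y hy, mul_neg] at this
    exact this
  · intro y hy
    rw [← G_form y hy.le]
    exact (norm_integral_le_integral_norm _).trans (ml_int_norm_le B hB y hy.le)
  · have h1 : 3 / (2 * π) * (om * LTr hh ((0:ℝ) * om)).im = 1 := by
      rw [← G_form 0 le_rfl, ml_laplace_zero]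
    rw [← h1]
    refine Tendsto.const_mul _ ((Complex.continuous_im.tendsto _).comp (Tendsto.const_mul _ ?_))
    unfold LTr
    refine tendsto_integral_filter_of_dominated_convergence
      (fun w : ℝ => (1 + w ^ (3/2 : ℝ) / 2)⁻¹) ?_ ?_ integrable_den ?_
    · exact Eventually.of_forall fun y => Measurable.aestronglyMeasurable (by fun_prop)
    · filter_upwards [self_mem_nhdsWithin] with y hy
      have hy0 : (0:ℝ) < y := hy
      refine (ae_restrict_iff' measurableSet_Ioi).2 (Eventually.of_forall fun w hw => ?_)
      have hw0 : (0:ℝ) < w := hw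
      rw [norm_mul, norm_cexp_neg_mul]
      refine (mul_le_of_le_one_right (norm_nonneg _) ?_).trans (norm_hh_le w hw)
      rw [Real.exp_le_one_iff]
      have := mul_pos (om_mul_re y hy0) hw0
      linarith
    · refine Eventually.of_forall fun w => ?_
      have hc : Continuous fun y : ℝ => hh w * Complex.exp (-(y * om) * w) := by fun_prop
      exact (hc.tendsto 0).mono_left nhdsWithin_le_nhds


/-- the series `ν₁(x) = ∑ₖ pₖ·(δₖ/2)·f_{2/3}(δₖ|x|)` and
`ν̂₁(x) = ∑ₖ pₖ·(δₖ/2)·e^{-δₖ|x|}` converge, and the exponential-time mixture of `ν₁`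
equals `ν̂₁`.  Here `δ k` stands for `δ'_{k+1}`, the zeros of `h ↦ u'(-h)` on `(0,∞)`,
and `pₖ = (u'(0)²/2)·δₖ⁻⁴`. -/
theorem stmt17
    (u : ℝ → ℝ) (hu_smooth : ContDiff ℝ 2 u)
    (hu_ode : ∀ h : ℝ, deriv (deriv u) h = 2 * h * u h)
    (hu_zero : u 0 = 1)
    (hu'_zero : deriv u 0 = -((6:ℝ) ^ ((1:ℝ)/3) * Real.Gamma (2/3) / Real.Gamma (1/3)))
    (hu_pos : ∀ h : ℝ, 0 ≤ h → 0 < u h)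
    (hu_anti : StrictAntiOn u (Ici 0))
    (hu_lim : Tendsto u atTop (𝓝 0))
    (δ : ℕ → ℝ) (hδ_pos : ∀ k, 0 < δ k) (hδ_mono : StrictMono δ)
    (hδ_zero : ∀ k, deriv u (-(δ k)) = 0)
    (hδ_all : ∀ x : ℝ, 0 < x → deriv u (-x) = 0 → ∃ k, δ k = x)
    (p : ℕ → ℝ) (hp : ∀ k, p k = (deriv u 0) ^ 2 / 2 * ((δ k) ^ 4)⁻¹) :
    (∀ x : ℝ, Summable (fun k : ℕ => p k * (δ k / 2) * mittagLeffler23 (δ k * |x|))) ∧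
    (∀ x : ℝ, Summable (fun k : ℕ => p k * (δ k / 2) * Real.exp (-(δ k) * |x|))) ∧
    (∀ x : ℝ,
      (∫ t in Ioi (0:ℝ), Real.exp (-t) * t ^ (-(2:ℝ)/3) *
        ∑' k : ℕ, p k * (δ k / 2) * mittagLeffler23 (δ k * |t ^ (-(2:ℝ)/3) * x|)) =
      ∑' k : ℕ, p k * (δ k / 2) * Real.exp (-(δ k) * |x|)) := by
  have hsum := summable_delta u hu_smooth hu_ode hu_zero δ hδ_pos hδ_mono hδ_zero
  have hc : ∀ k, p k * (δ k / 2) = (deriv u 0) ^ 2 / 4 * ((δ k) ^ 3)⁻¹ := by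
    intro k
    have := (hδ_pos k).ne'
    rw [hp]; field_simp; norm_num
  have hcs : Summable fun k => p k * (δ k / 2) := by
    simp_rw [hc]; exact hsum.mul_left _
  have hc0 : ∀ k, 0 ≤ p k * (δ k / 2) := by
    intro k; rw [hc]; have := hδ_pos k; positivity
  obtain ⟨B, hB0, hB⟩ := ml_bound
  refine ⟨fun x => ?_, fun x => ?_, fun x => ?_⟩
  · refine Summable.of_norm_bounded (hcs.mul_right B) fun k => ?_
    rw [norm_mul, Real.norm_of_nonneg (hc0 k), Real.norm_eq_abs]
    have := hδ_pos k
    exact mul_le_mul_of_nonneg_left (hB _ (by positivity)) (hc0 k)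
  · refine Summable.of_norm_bounded hcs fun k => ?_
    rw [norm_mul, Real.norm_of_nonneg (hc0 k), Real.norm_of_nonneg (Real.exp_pos _).le]
    refine mul_le_of_le_one_right (hc0 k) ?_
    rw [Real.exp_le_one_iff]
    have := mul_nonneg (hδ_pos k).le (abs_nonneg x)
    linarith
  · have hy : ∀ k, 0 ≤ δ k * |x| := fun k => mul_nonneg (hδ_pos k).le (abs_nonneg x)
    have h1 : ∀ t ∈ Ioi (0:ℝ), Real.exp (-t) * t ^ (-(2:ℝ)/3) *
        ∑' k : ℕ, p k * (δ k / 2) * mittagLeffler23 (δ k * |t ^ (-(2:ℝ)/3) * x|) =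
        ∑' k : ℕ, p k * (δ k / 2) * (Real.exp (-t) * t ^ (-(2:ℝ)/3) *
          mittagLeffler23 (t ^ (-(2:ℝ)/3) * (δ k * |x|))) := by
      intro t ht
      have ht0 : (0:ℝ) < t := ht
      rw [← tsum_mul_left]
      refine tsum_congr fun k => ?_
      rw [abs_mul, abs_of_pos (by positivity : 0 < t ^ (-(2:ℝ)/3)),
        mul_left_comm (δ k) (t ^ (-(2:ℝ)/3)) |x|]
      ring
    rw [setIntegral_congr_fun measurableSet_Ioi h1,
      ← integral_tsum_of_summable_integral_norm]
    · refine tsum_congr fun k => ?_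
      rw [integral_const_mul, ml_laplace _ (hy k), neg_mul]
    · exact fun k => (ml_integrable _ (hy k)).const_mul _
    · refine Summable.of_nonneg_of_le (fun k => integral_nonneg fun t => norm_nonneg _)
        (fun k => ?_) (hcs.mul_right (Real.Gamma (1/3) * B))
      simp_rw [norm_mul (p k * (δ k / 2))]
      rw [integral_const_mul, Real.norm_of_nonneg (hc0 k)]
      exact mul_le_mul_of_nonneg_left (ml_int_norm_le B hB _ (hy k)) (hc0 k)
end
end

section
/- Let u be the normalized Airy function, 0 < δ'₁ < δ'₂ < ... the increasing enumeration of the zeros of h ↦ u'(-h) on (0,∞), pₖ := (u'(0)²/2)·(δ'ₖ)^{-4}, f_{2/3} the Mittag-Leffler density of index 2/3, and ν₁(x) := ∑_{k=1}^∞ pₖ·(δ'ₖ/2)·f_{2/3}(δ'ₖ·|x|) for x ∈ ℝ. Then lim_{x→∞} x^{-3}·log(∫_x^∞ ν₁(y) dy) = -(4/27)·(δ'₁)³. Since ν₁ is the density of the position X(1) of the true self-repelling motion at time 1, this says lim_{x→∞} x^{-3}·log P(X(1) > x) = -(4/27)·(δ'₁)³. -/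
open Real MeasureTheory Set Filter Topology

noncomputable section

def GG (s a : ℝ) : ℝ := ∫ v in Ioi (0:ℝ), v ^ (s - 1) * Real.exp (-v - a / v)

lemma GG_meas (s a : ℝ) : AEStronglyMeasurable (fun v : ℝ => v ^ (s - 1) * Real.exp (-v - a / v))
    (volume.restrict (Ioi 0)) := by
  apply Measurable.aestronglyMeasurable
  fun_prop

lemma GG_base (s : ℝ) (hs : 0 < s) :
    Integrable (fun v : ℝ => Real.exp (-v) * v ^ (s - 1)) (volume.restrict (Ioi 0)) :=
  Real.GammaIntegral_convergent hs

lemma GG_int (s a : ℝ) (hs : 0 < s) (ha : 0 ≤ a) :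
    Integrable (fun v : ℝ => v ^ (s - 1) * Real.exp (-v - a / v)) (volume.restrict (Ioi 0)) := by
  refine (GG_base s hs).mono' (GG_meas s a) ?_
  filter_upwards [ae_restrict_mem measurableSet_Ioi] with v hv
  have hv : 0 < v := hv
  have h1 : 0 ≤ a / v := by positivity
  rw [Real.norm_of_nonneg (by positivity), mul_comm]
  gcongr
  linarith

lemma GG_deriv0 (s a : ℝ) (hs : 0 < s) (ha : 0 < a) :
    HasDerivAt (GG s) (∫ v in Ioi (0:ℝ), - (v ^ (s - 2) * Real.exp (-v - a / v))) a := by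
  have key := hasDerivAt_integral_of_dominated_loc_of_deriv_le (μ := volume.restrict (Ioi (0:ℝ)))
    (F := fun a v => v ^ (s - 1) * Real.exp (-v - a / v))
    (F' := fun a v => - (v ^ (s - 2) * Real.exp (-v - a / v)))
    (x₀ := a) (s := Ioi (a/2)) (bound := fun v => (2 / a) * (Real.exp (-v) * v ^ (s - 1)))
    (Ioi_mem_nhds (by linarith)) (Eventually.of_forall fun x => GG_meas s x)
    (GG_int s a hs ha.le) ?_ ?_ ((GG_base s hs).const_mul _) ?_
  · exact key.2
  · apply Measurable.aestronglyMeasurable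
    fun_prop
  · filter_upwards [ae_restrict_mem measurableSet_Ioi] with v hv x hx
    have hv : 0 < v := hv
    have hx : a / 2 < x := hx
    rw [norm_neg, Real.norm_of_nonneg (by positivity), sub_eq_add_neg (-v), Real.exp_add]
    have h1 : Real.exp (-(x / v)) ≤ (2 / a) * v := by
      have h2 : x / v ≤ Real.exp (x / v) := by linarith [Real.add_one_le_exp (x / v)]
      have h3 : 0 < x / v := div_pos (by linarith) hv
      rw [Real.exp_neg]
      calc (Real.exp (x / v))⁻¹ ≤ (x / v)⁻¹ := by gcongr
        _ = v / x := by rw [inv_div]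
        _ ≤ v / (a / 2) := by gcongr
        _ = _ := by field_simp
    have h4 : v ^ (s - 1) = v ^ (s - 2) * v := by
      rw [show s - 1 = (s - 2) + 1 by ring, Real.rpow_add_one hv.ne']
    rw [h4]
    calc v ^ (s - 2) * (Real.exp (-v) * Real.exp (-(x / v)))
        ≤ v ^ (s - 2) * (Real.exp (-v) * ((2 / a) * v)) := by gcongr
      _ = _ := by ring
  · filter_upwards [ae_restrict_mem measurableSet_Ioi] with v hv x hx
    have hv : 0 < v := hv
    have h4 : v ^ (s - 1) = v ^ (s - 2) * v := by
      rw [show s - 1 = (s - 2) + 1 by ring, Real.rpow_add_one hv.ne']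
    have h5 : HasDerivAt (fun a : ℝ => -v - a / v) (-(1 / v)) x := by
      simpa using ((hasDerivAt_id x).div_const v).const_sub (-v)
    refine ((h5.exp).const_mul (v ^ (s - 1))).congr_deriv ?_
    rw [h4]; field_simp

lemma GG_symm (s a : ℝ) (ha : 0 < a) :
    ∫ v in Ioi (0:ℝ), (v ^ (s - 2) * Real.exp (-v - a / v)) = a ^ (s - 1) * GG (1 - s) a := by
  have h1 := integral_comp_mul_left_Ioi (fun v : ℝ => v ^ (s - 2) * Real.exp (-v - a / v)) 0 ha
  have h2 := integral_comp_rpow_Ioi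
    (fun w : ℝ => (a * w) ^ (s - 2) * Real.exp (-(a * w) - a / (a * w))) (p := -1) (by norm_num)
  rw [mul_zero] at h1
  rw [h1] at h2
  have h3 : ∫ v in Ioi (0:ℝ), (v ^ (s - 2) * Real.exp (-v - a / v))
      = a * (a⁻¹ • ∫ v in Ioi (0:ℝ), (v ^ (s - 2) * Real.exp (-v - a / v))) := by
    rw [smul_eq_mul]; field_simp
  rw [h3, ← h2, GG, ← integral_const_mul, ← integral_const_mul]
  apply setIntegral_congr_fun measurableSet_Ioi
  intro x hx
  have hx : 0 < x := hx
  simp only [smul_eq_mul]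
  have e1 : a * x ^ (-1:ℝ) = a / x := by rw [Real.rpow_neg_one]; rfl
  rw [e1, Real.div_rpow ha.le hx.le]
  have e2 : a / (a / x) = x := by field_simp
  rw [e2]
  have e3 : a ^ (s - 1) = a ^ (s - 2) * a := by
    rw [show s - 1 = (s - 2) + 1 by ring, Real.rpow_add_one ha.ne']
  have e4 : x ^ (1 - s - 1) = x ^ (-1 - 1 : ℝ) / x ^ (s - 2) := by
    rw [← Real.rpow_sub hx]; ring_nf
  rw [e3, e4]
  have e5 : -(a / x) - x = -x - a / x := by ring
  rw [e5]
  simp only [abs_neg, abs_one, one_mul]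
  ring

lemma GG_deriv (s a : ℝ) (hs : 0 < s) (ha : 0 < a) :
    HasDerivAt (GG s) (-(a ^ (s - 1) * GG (1 - s) a)) a := by
  have := GG_deriv0 s a hs ha
  rwa [integral_neg, GG_symm s a ha] at this

lemma GG_zero (s : ℝ) (hs : 0 < s) : Tendsto (GG s) (𝓝[>] 0) (𝓝 (Real.Gamma s)) := by
  rw [Real.Gamma_eq_integral hs]
  refine tendsto_integral_filter_of_dominated_convergence
    (fun v => Real.exp (-v) * v ^ (s - 1)) (Eventually.of_forall fun x => GG_meas s x) ?_
    (GG_base s hs) ?_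
  · filter_upwards [self_mem_nhdsWithin] with a ha
    have ha : 0 < a := ha
    filter_upwards [ae_restrict_mem measurableSet_Ioi] with v hv
    have hv : 0 < v := hv
    have h1 : 0 ≤ a / v := by positivity
    rw [Real.norm_of_nonneg (by positivity), mul_comm]
    gcongr
    linarith
  · filter_upwards with v
    have : Continuous (fun a : ℝ => v ^ (s - 1) * Real.exp (-v - a / v)) := by fun_prop
    have h := (this.tendsto 0).mono_left (nhdsWithin_le_nhds (s := Ioi 0))
    simpa [mul_comm] using h

lemma GG_upper (s ε y : ℝ) (hs : 0 < s) (hε : 0 < ε) (hε1 : ε < 1) (hy : 0 < y) :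
    GG s (y ^ 6) ≤ ((1 / ε) ^ s * Real.Gamma s) * Real.exp (-(2 * (1 - ε) * y ^ 3)) := by
  rw [← Real.integral_rpow_mul_exp_neg_mul_Ioi hs hε, ← integral_mul_const, GG]
  have hbase : IntegrableOn (fun t : ℝ => t ^ (s - 1) * Real.exp (-(ε * t))) (Ioi 0) := by
    have := integrableOn_rpow_mul_exp_neg_mul_rpow (s := s - 1) (p := 1) (b := ε)
      (by linarith) one_pos hε
    simpa using this
  apply setIntegral_mono_on (GG_int s _ hs (by positivity)) (hbase.mul_const _) measurableSet_Ioi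
  intro v hv
  have hv : 0 < v := hv
  rw [mul_assoc, ← Real.exp_add]
  gcongr
  have h1 : 2 * y ^ 3 ≤ v + y ^ 6 / v := by
    have : v + y ^ 6 / v - 2 * y ^ 3 = (v - y ^ 3) ^ 2 / v := by field_simp; ring
    have h2 : 0 ≤ (v - y ^ 3) ^ 2 / v := by positivity
    linarith
  have h3 : 0 < y ^ 6 / v := by positivity
  nlinarith

lemma GG_lower (s y : ℝ) (hs : 0 < s) (hs1 : s < 1) (hy : 0 < y) :
    Real.exp (-1) * Real.exp (-(2 * y ^ 3)) / (1 + y ^ 3) ≤ GG s (y ^ 6) := by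
  have hy3 : 0 < y ^ 3 := by positivity
  have hsub : Ioc (y ^ 3) (y ^ 3 + 1) ⊆ Ioi 0 := fun v hv => lt_trans hy3 hv.1
  have h1 : ∫ v in Ioc (y ^ 3) (y ^ 3 + 1), v ^ (s - 1) * Real.exp (-v - y ^ 6 / v) ≤ GG s (y ^ 6) := by
    apply setIntegral_mono_set (GG_int s _ hs (by positivity))
    · filter_upwards [ae_restrict_mem measurableSet_Ioi] with v hv
      have hv : 0 < v := hv
      simp only [Pi.zero_apply]
      positivity
    · exact Eventually.of_forall hsub
  refine le_trans ?_ h1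
  have h2 : ∫ v in Ioc (y ^ 3) (y ^ 3 + 1), Real.exp (-1) * Real.exp (-(2 * y ^ 3)) / (1 + y ^ 3)
      = Real.exp (-1) * Real.exp (-(2 * y ^ 3)) / (1 + y ^ 3) := by
    simp
  rw [← h2]
  apply setIntegral_mono_on
  · simp
  · exact IntegrableOn.mono_set (GG_int s _ hs (by positivity)) hsub
  · exact measurableSet_Ioc
  · intro v hv
    have hv0 : 0 < v := hsub hv
    have a1 : (1 + y ^ 3)⁻¹ ≤ v ^ (s - 1) := by
      have b1 : (1 + y ^ 3) ^ (s - 1) ≤ v ^ (s - 1) :=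
        Real.rpow_le_rpow_of_nonpos hv0 (by linarith [hv.2]) (by linarith)
      refine le_trans ?_ b1
      rw [← Real.rpow_neg_one]
      exact Real.rpow_le_rpow_of_exponent_le (by linarith) (by linarith)
    have a2 : Real.exp (-1) * Real.exp (-(2 * y ^ 3)) ≤ Real.exp (-v - y ^ 6 / v) := by
      rw [← Real.exp_add]
      gcongr
      have : y ^ 6 / v ≤ y ^ 3 := by
        rw [div_le_iff₀ hv0]
        nlinarith [hv.1]
      linarith [hv.2]
    rw [div_eq_mul_inv, mul_comm]
    gcongr

lemma GG_pos (s y : ℝ) (hs : 0 < s) (hs1 : s < 1) (hy : 0 < y) : 0 < GG s (y ^ 6) :=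
  lt_of_lt_of_le (by positivity) (GG_lower s y hs hs1 hy)

lemma GG_dA (y : ℝ) (hy : 0 < y) :
    HasDerivAt (fun y => GG (2/3) (y ^ 6)) (-6 * y ^ 3 * GG (1/3) (y ^ 6)) y := by
  have h := (GG_deriv (2/3) (y ^ 6) (by norm_num) (by positivity)).comp y (hasDerivAt_pow 6 y)
  refine h.congr_deriv ?_
  have : (y ^ 6) ^ ((2:ℝ)/3 - 1) = (y ^ 2)⁻¹ := by
    rw [← Real.rpow_natCast, ← Real.rpow_mul hy.le, ← Real.rpow_natCast y 2, ← Real.rpow_neg hy.le]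
    norm_num
  rw [this]
  norm_num
  field_simp

lemma GG_dC (y : ℝ) (hy : 0 < y) :
    HasDerivAt (fun y => GG (1/3) (y ^ 6)) (-6 * y * GG (2/3) (y ^ 6)) y := by
  have h := (GG_deriv (1/3) (y ^ 6) (by norm_num) (by positivity)).comp y (hasDerivAt_pow 6 y)
  refine h.congr_deriv ?_
  have : (y ^ 6) ^ ((1:ℝ)/3 - 1) = (y ^ 4)⁻¹ := by
    rw [← Real.rpow_natCast, ← Real.rpow_mul hy.le, ← Real.rpow_natCast y 4, ← Real.rpow_neg hy.le]
    norm_num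
  rw [this]
  norm_num
  field_simp

lemma GG_lim (s : ℝ) (hs : 0 < s) :
    Tendsto (fun y => GG s (y ^ 6)) (𝓝[>] 0) (𝓝 (Real.Gamma s)) := by
  apply (GG_zero s hs).comp
  apply tendsto_nhdsWithin_of_tendsto_nhds_of_eventually_within
  · have : Continuous (fun y : ℝ => y ^ 6) := by fun_prop
    simpa using (this.tendsto 0).mono_left (nhdsWithin_le_nhds (s := Ioi 0))
  · filter_upwards [self_mem_nhdsWithin] with y hy
    exact pow_pos (mem_Ioi.mp hy) 6

def Ent (c : ℕ → ℝ) : Prop := ∀ r : ℝ, 0 ≤ r → Summable (fun k => |c k| * r ^ k)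

def dc (c : ℕ → ℝ) (k : ℕ) : ℝ := ((k : ℝ) + 1) * c (k + 1)

def ser (c : ℕ → ℝ) (x : ℝ) : ℝ := ∑' k : ℕ, c k * x ^ k

lemma Ent.summable {c : ℕ → ℝ} (h : Ent c) (x : ℝ) : Summable (fun k => c k * x ^ k) := by
  apply Summable.of_norm
  simpa [abs_mul, abs_pow] using h |x| (abs_nonneg x)

lemma Ent.dc {c : ℕ → ℝ} (h : Ent c) : Ent (dc c) := by
  intro r hr
  have h1 := (summable_nat_add_iff 1).mpr (h (2 * (r + 1)) (by positivity))
  refine Summable.of_nonneg_of_le (fun k => by positivity) (fun k => ?_) h1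
  unfold _root_.dc
  rw [abs_mul, abs_of_nonneg (by positivity : (0:ℝ) ≤ (k:ℝ) + 1), mul_pow]
  have h2 : (k : ℝ) + 1 ≤ 2 ^ (k + 1) := by
    have := (Nat.lt_two_pow_self (n := k + 1)).le
    exact_mod_cast this
  have h3 : r ^ k ≤ (r + 1) ^ (k + 1) := by
    calc r ^ k ≤ (r + 1) ^ k := by gcongr; linarith
      _ ≤ (r + 1) ^ (k + 1) := pow_le_pow_right₀ (by linarith) (by omega)
  calc ((k : ℝ) + 1) * |c (k + 1)| * r ^ k = |c (k + 1)| * (((k : ℝ) + 1) * r ^ k) := by ring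
    _ ≤ |c (k + 1)| * (2 ^ (k + 1) * (r + 1) ^ (k + 1)) := by gcongr

lemma Ent.hasDerivAt {c : ℕ → ℝ} (h : Ent c) (x : ℝ) :
    HasDerivAt (ser c) (ser (_root_.dc c) x) x := by
  set R := |x| + 1
  have hR : 0 ≤ R := by positivity
  have hsum : Summable (fun n : ℕ => |c n| * (n * R ^ (n - 1))) := by
    rw [← summable_nat_add_iff 1]
    refine (h.dc R hR).congr fun k => ?_
    unfold _root_.dc
    rw [abs_mul, abs_of_nonneg (by positivity : (0:ℝ) ≤ (k:ℝ) + 1)]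
    push_cast
    ring
  have key := hasDerivAt_tsum_of_isPreconnected (g := fun n (y : ℝ) => c n * y ^ n)
    (g' := fun n (y : ℝ) => c n * (n * y ^ (n - 1))) (t := Ioo (-R) R) hsum isOpen_Ioo
    isPreconnected_Ioo (fun n y _ => (hasDerivAt_pow n y).const_mul (c n)) ?_
    (y₀ := 0) (by constructor <;> (simp only [R]; linarith [abs_nonneg x])) (h.summable 0)
    (y := x) (by constructor <;> (simp only [R]; linarith [abs_nonneg x, le_abs_self x, neg_abs_le x]))
  · refine key.congr_deriv ?_
    have hs : Summable (fun n : ℕ => c n * (n * x ^ (n - 1))) := by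
      rw [← summable_nat_add_iff 1]
      refine (h.dc.summable x).congr fun k => ?_
      unfold _root_.dc
      push_cast
      ring
    rw [hs.tsum_eq_zero_add]
    simp only [CharP.cast_eq_zero, zero_mul, mul_zero, zero_add]
    unfold ser
    refine tsum_congr fun k => ?_
    unfold _root_.dc
    push_cast
    ring
  · intro n y hy
    have : |y| ≤ R := (abs_lt.mpr hy).le
    rw [norm_mul, norm_mul, norm_pow]
    simp only [Real.norm_eq_abs, Nat.abs_cast]
    gcongr

lemma ser_zero (c : ℕ → ℝ) : ser c 0 = c 0 := by
  unfold ser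
  rw [tsum_eq_single 0]
  · simp
  · intro n hn; simp [hn]

def cf (k : ℕ) : ℝ := (1 / π) * ((Real.sin (2 * π * ((k : ℝ) + 1) / 3) *
  Real.Gamma (2 * ((k : ℝ) + 1) / 3) / (Nat.factorial k : ℝ)) * (-1) ^ k)

lemma ml_eq_s19 : mittagLeffler23 = ser cf := by
  funext x
  unfold mittagLeffler23 ser cf
  rw [← tsum_mul_left]
  refine tsum_congr fun k => ?_
  rw [neg_pow x]; ring

lemma Gamma_step (x : ℝ) (hx : 0 < x) : Real.Gamma (x + 2/3) ≤ x ^ ((2:ℝ)/3) * Real.Gamma x := by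
  have h := Real.Gamma_mul_add_mul_le_rpow_Gamma_mul_rpow_Gamma (s := x) (t := x + 1)
    (a := 1/3) (b := 2/3) hx (by linarith) (by norm_num) (by norm_num) (by norm_num)
  rw [show 1/3 * x + 2/3 * (x + 1) = x + 2/3 by ring, Real.Gamma_add_one hx.ne'] at h
  have hG := Real.Gamma_pos_of_pos hx
  refine h.trans_eq ?_
  rw [Real.mul_rpow hx.le hG.le]
  have : Real.Gamma x ^ ((1:ℝ)/3) * Real.Gamma x ^ ((2:ℝ)/3) = Real.Gamma x := by
    rw [← Real.rpow_add hG]; norm_num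
  linear_combination (x ^ ((2:ℝ)/3)) * this

lemma ent_aux : Ent (fun k : ℕ => Real.Gamma (2 * ((k : ℝ) + 1) / 3) / (Nat.factorial k : ℝ)) := by
  intro r hr
  have hlim : Tendsto (fun n : ℕ => r * ((n : ℝ) + 1) ^ (-((1:ℝ)/3))) atTop (𝓝 (r * 0)) := by
    apply Tendsto.const_mul
    exact (tendsto_rpow_neg_atTop (by norm_num)).comp
      (tendsto_atTop_add_const_right _ _ tendsto_natCast_atTop_atTop)
  rw [mul_zero] at hlim
  refine summable_of_ratio_norm_eventually_le (r := 1/2) (by norm_num) ?_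
  filter_upwards [hlim.eventually_le_const (show (0:ℝ) < 1/2 by norm_num)] with n hn
  have hx : 0 < 2 * ((n : ℝ) + 1) / 3 := by positivity
  have hG := Real.Gamma_pos_of_pos hx
  have hx' : 0 < 2 * (((n + 1 : ℕ) : ℝ) + 1) / 3 := by positivity
  have hG' := Real.Gamma_pos_of_pos hx'
  have hst := Gamma_step _ hx
  rw [show 2 * ((n : ℝ) + 1) / 3 + 2 / 3 = 2 * (((n + 1 : ℕ) : ℝ) + 1) / 3 by push_cast; ring] at hst
  rw [Real.norm_of_nonneg (by positivity), Real.norm_of_nonneg (by positivity),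
    abs_of_nonneg (by positivity), abs_of_nonneg (by positivity)]
  have hn1 : (0:ℝ) < (n : ℝ) + 1 := by positivity
  have h1 : (2 * ((n : ℝ) + 1) / 3) ^ ((2:ℝ)/3) ≤ ((n : ℝ) + 1) * ((n : ℝ) + 1) ^ (-((1:ℝ)/3)) := by
    calc (2 * ((n : ℝ) + 1) / 3) ^ ((2:ℝ)/3) ≤ ((n : ℝ) + 1) ^ ((2:ℝ)/3) := by
          gcongr; linarith
      _ = _ := by
          rw [mul_comm, ← Real.rpow_add_one hn1.ne']; norm_num
  rw [Nat.factorial_succ]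
  push_cast
  push_cast at hst
  have hf : (0:ℝ) < (Nat.factorial n : ℝ) := by positivity
  calc Real.Gamma (2 * ((n : ℝ) + 1 + 1) / 3) / (((n : ℝ) + 1) * (Nat.factorial n : ℝ)) * r ^ (n + 1)
      ≤ (((n : ℝ) + 1) * ((n : ℝ) + 1) ^ (-((1:ℝ)/3)) * Real.Gamma (2 * ((n : ℝ) + 1) / 3))
          / (((n : ℝ) + 1) * (Nat.factorial n : ℝ)) * r ^ (n + 1) := by
        gcongr
        exact hst.trans (by gcongr)
    _ = (r * ((n : ℝ) + 1) ^ (-((1:ℝ)/3))) *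
          (Real.Gamma (2 * ((n : ℝ) + 1) / 3) / (Nat.factorial n : ℝ) * r ^ n) := by
        rw [pow_succ]; field_simp
    _ ≤ _ := by gcongr

lemma ent_cf : Ent cf := by
  intro r hr
  refine Summable.of_nonneg_of_le (fun k => by positivity) (fun k => ?_) ((ent_aux r hr).mul_left (1 / π))
  have hx : 0 < 2 * ((k : ℝ) + 1) / 3 := by positivity
  have hG := Real.Gamma_pos_of_pos hx
  unfold cf
  rw [← mul_assoc, ← mul_assoc]
  refine mul_le_mul_of_nonneg_right ?_ (pow_nonneg hr k)
  rw [abs_mul, abs_mul, abs_pow, abs_neg, abs_one, one_pow, mul_one,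
    abs_of_nonneg (by positivity : (0:ℝ) ≤ 1 / π)]
  refine mul_le_mul_of_nonneg_left ?_ (by positivity)
  rw [mul_div_assoc, abs_mul]
  exact mul_le_of_le_one_left (abs_nonneg _) (Real.abs_sin_le_one _)

lemma cf_two : cf 2 = 0 := by
  unfold cf
  have : 2 * π * (((2:ℕ) : ℝ) + 1) / 3 = 2 * π := by push_cast; ring
  rw [this, Real.sin_two_pi]; simp

lemma cf_zero : cf 0 = (1 / π) * (√3 / 2 * Real.Gamma (2/3)) := by
  unfold cf
  have : 2 * π * (((0:ℕ) : ℝ) + 1) / 3 = π - π / 3 := by push_cast; ring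
  rw [this, Real.sin_pi_sub, Real.sin_pi_div_three]
  norm_num

lemma cf_one : cf 1 = (1 / π) * (√3 / 2 * (1/3 * Real.Gamma (1/3))) := by
  unfold cf
  have : 2 * π * (((1:ℕ) : ℝ) + 1) / 3 = π / 3 + π := by push_cast; ring
  rw [this, Real.sin_add_pi, Real.sin_pi_div_three]
  have h := Real.Gamma_add_one (s := 1/3) (by norm_num)
  rw [← h]
  norm_num

lemma cf_rec (k : ℕ) : ((k : ℝ) + 3) * ((k : ℝ) + 2) * cf (k + 3) = -(2/9) * (2 * k + 5) * cf k := by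
  unfold cf
  have h1 : 2 * π * (((k + 3 : ℕ) : ℝ) + 1) / 3 = 2 * π * ((k : ℝ) + 1) / 3 + 2 * π := by
    push_cast; ring
  have hx : 0 < 2 * ((k : ℝ) + 1) / 3 := by positivity
  have h2 : 2 * (((k + 3 : ℕ) : ℝ) + 1) / 3 = (2 * ((k : ℝ) + 1) / 3 + 1) + 1 := by
    push_cast; ring
  rw [h1, Real.sin_add_two_pi, h2, Real.Gamma_add_one (by positivity), Real.Gamma_add_one hx.ne',
    Nat.factorial_succ, Nat.factorial_succ, Nat.factorial_succ]
  push_cast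
  have hf : (0:ℝ) < (Nat.factorial k : ℝ) := by positivity
  field_simp
  ring

lemma ml_ode (x : ℝ) : ser (dc (dc cf)) x
    = -(4/9) * x ^ 2 * ser (dc cf) x - (10/9) * x * ser cf x := by
  have s0 := ent_cf.summable x
  have s1 := ent_cf.dc.summable x
  have s2 := ent_cf.dc.dc.summable x
  have t1 : x * ser (dc cf) x = ∑' k : ℕ, (k : ℝ) * cf k * x ^ k := by
    have hs : Summable (fun k : ℕ => (k : ℝ) * cf k * x ^ k) := by
      rw [← summable_nat_add_iff 1]
      refine (s1.mul_left x).congr fun k => ?_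
      unfold dc; push_cast; ring
    rw [hs.tsum_eq_zero_add]
    unfold ser
    rw [← tsum_mul_left]
    simp only [CharP.cast_eq_zero, zero_mul, zero_add]
    refine tsum_congr fun k => ?_
    unfold dc; push_cast; ring
  have hs : Summable (fun k : ℕ => (k : ℝ) * cf k * x ^ k) := by
    rw [← summable_nat_add_iff 1]
    refine (s1.mul_left x).congr fun k => ?_
    unfold dc; push_cast; ring
  have t2 : ser (dc (dc cf)) x = ∑' k : ℕ, (x * (-(4/9) * ((k : ℝ) * cf k * x ^ k) -
      (10/9) * (cf k * x ^ k))) := by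
    unfold ser
    rw [s2.tsum_eq_zero_add]
    have : dc (dc cf) 0 = 0 := by unfold dc; norm_num [cf_two]
    rw [this, zero_mul, zero_add]
    refine tsum_congr fun k => ?_
    have := cf_rec k
    unfold dc
    push_cast
    rw [pow_succ]
    rw [show k + 1 + 1 + 1 = k + 3 by ring]
    linear_combination (x ^ k * x) * this
  rw [t2, tsum_mul_left, Summable.tsum_sub (hs.mul_left _) (s0.mul_left _), tsum_mul_left,
    tsum_mul_left, ← t1]
  unfold ser; ring

lemma const_of_lim (φ : ℝ → ℝ) (L : ℝ) (h : ∀ y, 0 < y → HasDerivAt φ 0 y)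
    (hL : Tendsto φ (𝓝[>] 0) (𝓝 L)) (y : ℝ) (hy : 0 < y) : φ y = L := by
  have hc : ∀ z ∈ Ioi (0:ℝ), φ z = φ y := by
    intro z hz
    exact isOpen_Ioi.is_const_of_deriv_eq_zero isPreconnected_Ioi
      (fun w hw => (h w hw).differentiableAt.differentiableWithinAt)
      (fun w hw => (h w hw).deriv) hz hy
  have : Tendsto φ (𝓝[>] 0) (𝓝 (φ y)) := by
    apply tendsto_const_nhds.congr'
    filter_upwards [self_mem_nhdsWithin] with z hz
    exact (hc z hz).symm
  exact tendsto_nhds_unique this hL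

def Cf (y : ℝ) : ℝ := 3 * (Real.exp (2 * y ^ 3) * (ser (dc cf) (3 * y) + 4 * y ^ 2 * ser cf (3 * y)))

def Af (y : ℝ) : ℝ := Real.exp (2 * y ^ 3) * ser cf (3 * y) - y * Cf y

lemma scale_deriv {c : ℕ → ℝ} (h : Ent c) (y : ℝ) :
    HasDerivAt (fun y => ser c (3 * y)) (3 * ser (dc c) (3 * y)) y := by
  have h1 : HasDerivAt (fun y : ℝ => 3 * y) 3 y := by
    simpa using (hasDerivAt_id y).const_mul 3
  have := (h.hasDerivAt (3 * y)).comp y h1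
  exact this.congr_deriv (by ring)

lemma exp_deriv3 (y : ℝ) :
    HasDerivAt (fun y : ℝ => Real.exp (2 * y ^ 3)) (Real.exp (2 * y ^ 3) * (6 * y ^ 2)) y := by
  have h1 := ((hasDerivAt_pow 3 y).const_mul 2).exp
  refine h1.congr_deriv ?_
  norm_num; ring

lemma Cf_deriv (y : ℝ) : HasDerivAt Cf (-6 * y * Af y) y := by
  have h1 := scale_deriv ent_cf y
  have h2 := scale_deriv ent_cf.dc y
  have h3 := (((hasDerivAt_pow 2 y).const_mul 4).mul h1)
  have h4 := ((exp_deriv3 y).mul (h2.add h3)).const_mul 3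
  refine h4.congr_deriv ?_
  simp only [ml_ode, Af, Cf, Pi.add_apply, Pi.mul_apply]
  norm_num
  ring

lemma Af_deriv (y : ℝ) : HasDerivAt Af (-6 * y ^ 3 * Cf y) y := by
  have h1 := scale_deriv ent_cf y
  have h4 := ((exp_deriv3 y).mul h1).sub ((hasDerivAt_id y).mul (Cf_deriv y))
  refine h4.congr_deriv ?_
  simp only [Af, Cf, id]
  ring

lemma lim_of_deriv {φ : ℝ → ℝ} {φ' : ℝ} (h : HasDerivAt φ φ' 0) :
    Tendsto φ (𝓝[>] 0) (𝓝 (φ 0)) :=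
  h.continuousAt.tendsto.mono_left nhdsWithin_le_nhds

lemma ml_repr (y : ℝ) (hy : 0 < y) : mittagLeffler23 (3 * y)
    = (√3 / (2 * π)) * (Real.exp (-(2 * y ^ 3)) * (GG (2/3) (y ^ 6) + y * GG (1/3) (y ^ 6))) := by
  have hA0 : Af 0 = (√3 / (2 * π)) * Real.Gamma (2/3) := by
    simp only [Af, mul_zero, zero_mul, sub_zero, ser_zero, cf_zero]
    norm_num
    ring
  have hC0 : Cf 0 = (√3 / (2 * π)) * Real.Gamma (1/3) := by
    simp only [Cf, mul_zero, ser_zero, dc]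
    norm_num [cf_one]
    ring
  have lA := lim_of_deriv (Af_deriv 0)
  have lC := lim_of_deriv (Cf_deriv 0)
  have gA := GG_lim (2/3) (by norm_num)
  have gC := GG_lim (1/3) (by norm_num)
  rw [hA0] at lA
  rw [hC0] at lC
  have hW : ∀ y, 0 < y → Af y * GG (1/3) (y ^ 6) - Cf y * GG (2/3) (y ^ 6) = 0 := by
    apply const_of_lim
    · intro y hy
      have := ((Af_deriv y).mul (GG_dC y hy)).sub ((Cf_deriv y).mul (GG_dA y hy))
      exact this.congr_deriv (by ring)
    · have := (lA.mul gC).sub (lC.mul gA)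
      convert this using 2
      ring
  have hR : ∀ y, 0 < y → Af y / GG (2/3) (y ^ 6) = √3 / (2 * π) := by
    apply const_of_lim
    · intro y hy
      have hp := GG_pos (2/3) y (by norm_num) (by norm_num) hy
      have := (Af_deriv y).div (GG_dA y hy) hp.ne'
      refine this.congr_deriv ?_
      rw [div_eq_zero_iff]
      left
      linear_combination (6 * y ^ 3) * hW y hy
    · have hg := Real.Gamma_pos_of_pos (show (0:ℝ) < 2/3 by norm_num)
      have := lA.div gA hg.ne'
      rwa [mul_div_cancel_right₀ _ hg.ne'] at this
  have hp := GG_pos (2/3) y (by norm_num) (by norm_num) hy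
  have e1 : Af y = √3 / (2 * π) * GG (2/3) (y ^ 6) := by
    have := hR y hy
    rwa [div_eq_iff hp.ne'] at this
  have e2 : Cf y = √3 / (2 * π) * GG (1/3) (y ^ 6) := by
    have h1 := hW y hy
    rw [e1] at h1
    have : GG (2/3) (y ^ 6) * (√3 / (2 * π) * GG (1/3) (y ^ 6) - Cf y) = 0 := by
      linear_combination h1
    rcases mul_eq_zero.mp this with h | h
    · exact absurd h hp.ne'
    · linarith
  have e3 : Real.exp (2 * y ^ 3) * ser cf (3 * y) = Af y + y * Cf y := by
    simp only [Af]; ring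
  have e4 : Real.exp (-(2 * y ^ 3)) * Real.exp (2 * y ^ 3) = 1 := by
    rw [← Real.exp_add]; simp
  rw [ml_eq_s19]
  calc ser cf (3 * y) = Real.exp (-(2 * y ^ 3)) * (Real.exp (2 * y ^ 3) * ser cf (3 * y)) := by
        rw [← mul_assoc, e4, one_mul]
    _ = _ := by rw [e3, e1, e2]; ring

lemma ml_cont : Continuous mittagLeffler23 := by
  rw [ml_eq_s19]
  exact continuous_iff_continuousAt.mpr fun x => (ent_cf.hasDerivAt x).continuousAt

lemma ml_upper (ε : ℝ) (hε : 0 < ε) (hε1 : ε < 1) : ∃ C : ℝ, 0 < C ∧ ∀ x : ℝ, 0 < x →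
    mittagLeffler23 x ≤ C * Real.exp (-((4/27) * (1 - ε) * x ^ 3)) := by
  have g2 := Real.Gamma_pos_of_pos (show (0:ℝ) < 2/3 by norm_num)
  have g1 := Real.Gamma_pos_of_pos (show (0:ℝ) < 1/3 by norm_num)
  set K2 := (1 / ε) ^ ((2:ℝ)/3) * Real.Gamma (2/3)
  set K1 := (1 / ε) ^ ((1:ℝ)/3) * Real.Gamma (1/3)
  have hK2 : 0 < K2 := by positivity
  have hK1 : 0 < K1 := by positivity
  refine ⟨(√3 / (2 * π)) * ((K2 + K1) * (2 + 1 / (2 * ε))), by positivity, ?_⟩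
  intro x hx
  obtain ⟨y, rfl⟩ : ∃ y, x = 3 * y := ⟨x / 3, by ring⟩
  have hy : 0 < y := by linarith
  rw [ml_repr y hy]
  have u2 := GG_upper (2/3) ε y (by norm_num) hε hε1 hy
  have u1 := GG_upper (1/3) ε y (by norm_num) hε hε1 hy
  set E := Real.exp (-(2 * (1 - ε) * y ^ 3))
  have hE : 0 < E := Real.exp_pos _
  have hy3 : 0 < y ^ 3 := by positivity
  have b1 : GG (2/3) (y ^ 6) + y * GG (1/3) (y ^ 6) ≤ (K2 + K1) * (1 + y) * E := by
    have : y * GG (1/3) (y ^ 6) ≤ y * (K1 * E) := by gcongr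
    have h0 : 0 < y * K2 * E := by positivity
    have h1 : 0 < K1 * E := by positivity
    nlinarith
  have b2 : 1 + y ≤ (2 + 1 / (2 * ε)) * Real.exp (2 * ε * y ^ 3) := by
    have c1 : y ≤ 1 + y ^ 3 := by nlinarith [sq_nonneg (y - 1), mul_pos hy hy, sq_nonneg y]
    have c2 : 2 * ε * y ^ 3 ≤ Real.exp (2 * ε * y ^ 3) := by
      linarith [Real.add_one_le_exp (2 * ε * y ^ 3)]
    have c3 : 1 ≤ Real.exp (2 * ε * y ^ 3) := Real.one_le_exp (by positivity)
    have c4 : y ^ 3 = 1 / (2 * ε) * (2 * ε * y ^ 3) := by field_simp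
    have c5 : 1 / (2 * ε) * (2 * ε * y ^ 3) ≤ 1 / (2 * ε) * Real.exp (2 * ε * y ^ 3) := by gcongr
    nlinarith
  have b3 : Real.exp (-(2 * y ^ 3)) * (Real.exp (2 * ε * y ^ 3) * E)
      = Real.exp (-((4/27) * (1 - ε) * (3 * y) ^ 3)) := by
    simp only [E]
    rw [← Real.exp_add, ← Real.exp_add]
    congr 1
    ring
  rw [← b3]
  calc (√3 / (2 * π)) * (Real.exp (-(2 * y ^ 3)) * (GG (2/3) (y ^ 6) + y * GG (1/3) (y ^ 6)))
      ≤ (√3 / (2 * π)) * (Real.exp (-(2 * y ^ 3)) * ((K2 + K1) *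
        ((2 + 1 / (2 * ε)) * Real.exp (2 * ε * y ^ 3)) * E)) := by
        gcongr
        exact b1.trans (by gcongr)
    _ = _ := by ring

lemma ml_lower : ∃ c : ℝ, 0 < c ∧ ∀ x : ℝ, 0 < x →
    c * Real.exp (-((4/27) * x ^ 3)) / (1 + x ^ 3) ≤ mittagLeffler23 x := by
  refine ⟨(√3 / (2 * π)) * Real.exp (-1), by positivity, ?_⟩
  intro x hx
  obtain ⟨y, rfl⟩ : ∃ y, x = 3 * y := ⟨x / 3, by ring⟩
  have hy : 0 < y := by linarith
  rw [ml_repr y hy]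
  have u2 := GG_lower (2/3) y (by norm_num) (by norm_num) hy
  have u1 := GG_pos (1/3) y (by norm_num) (by norm_num) hy
  have b3 : Real.exp (-(2 * y ^ 3)) * Real.exp (-(2 * y ^ 3))
      = Real.exp (-((4/27) * (3 * y) ^ 3)) := by
    rw [← Real.exp_add]
    congr 1
    ring
  rw [← b3]
  have hy3 : 0 < y ^ 3 := by positivity
  have b4 : Real.exp (-1) * Real.exp (-(2 * y ^ 3)) / (1 + (3 * y) ^ 3)
      ≤ GG (2/3) (y ^ 6) + y * GG (1/3) (y ^ 6) := by
    have : 0 < y * GG (1/3) (y ^ 6) := by positivity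
    refine le_trans ?_ (u2.trans (by linarith))
    gcongr
    linarith
  calc _ = (√3 / (2 * π)) * (Real.exp (-(2 * y ^ 3)) *
        (Real.exp (-1) * Real.exp (-(2 * y ^ 3)) / (1 + (3 * y) ^ 3))) := by ring
    _ ≤ _ := by gcongr

lemma gap_zero (u : ℝ → ℝ) (hu_smooth : ContDiff ℝ 2 u)
    (hu_ode : ∀ h : ℝ, deriv (deriv u) h = 2 * h * u h) (a b : ℝ) (ha : 0 < a) (hab : a < b)
    (h1 : deriv u (-a) = 0) (h2 : deriv u (-b) = 0) (hmid : deriv u (-((a + b) / 2)) ≠ 0) :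
    1 ≤ (b - a) ^ 2 * (2 * b) := by
  have hd1 : ContDiff ℝ 1 (deriv u) := by
    have : ContDiff ℝ (1 + 1) u := by norm_num; exact hu_smooth
    exact (contDiff_succ_iff_deriv.mp this).2.2
  have hdu : Differentiable ℝ u := hu_smooth.differentiable (by norm_num)
  have hddu : Differentiable ℝ (deriv u) := hd1.differentiable (by norm_num)
  obtain ⟨r, hr, hr0⟩ := exists_deriv_eq_zero (f := deriv u) (a := -b) (b := -a) (by linarith)
    hddu.continuous.continuousOn (by rw [h1, h2])
  rw [hu_ode] at hr0
  have hur : u r = 0 := by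
    have : 2 * r ≠ 0 := by have := hr.2; intro h; linarith
    exact (mul_eq_zero.mp hr0).resolve_left this
  obtain ⟨m, hm, hmax⟩ := isCompact_Icc.exists_isMaxOn (s := Icc (-b) (-a))
    ⟨-a, by constructor <;> linarith⟩ (f := fun x => |deriv u x|)
    (hddu.continuous.abs.continuousOn)
  set A := |deriv u m| with hA
  have hApos : 0 < A := by
    have hmem : -((a + b) / 2) ∈ Icc (-b) (-a) := by constructor <;> linarith
    have := hmax hmem
    exact lt_of_lt_of_le (abs_pos.mpr hmid) this
  have hux : ∀ x ∈ Icc (-b) (-a), |u x| ≤ A * (b - a) := by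
    intro x hx
    have := (convex_Icc (-b) (-a)).norm_image_sub_le_of_norm_deriv_le (f := u) (C := A)
      (fun y _ => hdu y) (fun y hy => hmax hy) (Ioo_subset_Icc_self hr) hx
    rw [hur, sub_zero, Real.norm_eq_abs, Real.norm_eq_abs] at this
    refine this.trans ?_
    gcongr
    rw [abs_le]
    constructor <;> linarith [hx.1, hx.2, hr.1, hr.2]
  have hend := (convex_Icc (-b) (-a)).norm_image_sub_le_of_norm_deriv_le (f := deriv u)
      (C := 2 * b * (A * (b - a)))
      (fun y _ => hddu y) (fun y hy => by
        rw [hu_ode, Real.norm_eq_abs, abs_mul]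
        have e1 : |2 * y| ≤ 2 * b := by
          rw [abs_le]; constructor <;> linarith [hy.1, hy.2]
        have e2 := hux y hy
        gcongr
        linarith) (x := -b) (y := m) (by constructor <;> linarith) hm
  rw [h2, sub_zero, Real.norm_eq_abs, Real.norm_eq_abs] at hend
  have e3 : |m - -b| ≤ b - a := by
    rw [abs_le]; constructor <;> linarith [hm.1, hm.2]
  have e4 : A ≤ 2 * b * (A * (b - a)) * (b - a) := by
    refine hend.trans ?_
    have : 0 ≤ b - a := by linarith
    gcongr
    have : 0 < b := by linarith
    positivity
  by_contra hcon
  push Not at hcon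
  nlinarith

lemma cube_growth (δ : ℕ → ℝ) (hδ_pos : ∀ k, 0 < δ k) (hδ_mono : StrictMono δ)
    (hgap : ∀ k, 1 ≤ (δ (k + 1) - δ k) ^ 2 * (2 * δ (k + 1))) :
    ∃ c : ℝ, 0 < c ∧ ∀ k : ℕ, δ 0 ^ 3 + c * k ≤ δ k ^ 3 := by
  have h0 := hδ_pos 0
  refine ⟨√(δ 0 ^ 3 / 2), by positivity, ?_⟩
  intro k
  induction k with
  | zero => simp
  | succ k ih =>
    have hk := hδ_pos k
    have hk1 := hδ_pos (k + 1)
    have hlt := hδ_mono (Nat.lt_succ_self k)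
    have hge : δ 0 ≤ δ (k + 1) := hδ_mono.monotone (Nat.zero_le _)
    have hg := hgap k
    set a := δ k
    set b := δ (k + 1)
    have hlt : a < b := hlt
    have h3 : √(δ 0 ^ 3 / 2) ≤ b ^ 3 - a ^ 3 := by
      have e1 : (b - a) * b ^ 2 ≤ b ^ 3 - a ^ 3 := by
        have : b ^ 3 - a ^ 3 - (b - a) * b ^ 2 = (b - a) * (a * b + a ^ 2) := by ring
        have h5 : 0 ≤ (b - a) * (a * b + a ^ 2) := mul_nonneg (by linarith) (by positivity)
        linarith
      refine le_trans ?_ e1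
      apply Real.sqrt_le_iff.mpr
      refine ⟨mul_nonneg (by linarith) (by positivity), ?_⟩
      have e2 : δ 0 ^ 3 ≤ b ^ 3 := by gcongr
      have e3 : ((b - a) * b ^ 2) ^ 2 = ((b - a) ^ 2 * (2 * b)) * (b ^ 3 / 2) := by ring
      rw [e3]
      have e4 : 0 < b ^ 3 := by positivity
      nlinarith
    push_cast
    linarith

lemma log_lim (I : ℝ → ℝ) (D d : ℝ) (hD : 0 < D) (hd : 0 < d)
    (hU : ∀ ε, 0 < ε → ε < 1 → ∃ K : ℝ, 0 < K ∧ ∀ x, 1 ≤ x →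
      I x ≤ K * Real.exp (-((1 - ε) * D * x ^ 3)))
    (hL : ∃ c : ℝ, 0 < c ∧ ∀ x, 1 ≤ x →
      c * Real.exp (-(D * (x + 1) ^ 3)) / (1 + d * (x + 1) ^ 3) ≤ I x) :
    Tendsto (fun x => (x ^ 3)⁻¹ * Real.log (I x)) atTop (𝓝 (-D)) := by
  obtain ⟨c, hc, hL⟩ := hL
  have hinv : Tendsto (fun x : ℝ => x⁻¹) atTop (𝓝 0) := tendsto_inv_atTop_zero
  rw [tendsto_order]
  constructor
  · intro a ha
    have hcont : Continuous (fun t : ℝ =>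
      (Real.log c - Real.log (1 + d)) * t ^ 3 - D * (1 + t) ^ 3 - 3 * t ^ 2) := by fun_prop
    have hl := (hcont.tendsto 0).comp hinv
    have : (Real.log c - Real.log (1 + d)) * (0:ℝ) ^ 3 - D * (1 + 0) ^ 3 - 3 * 0 ^ 2 = -D := by ring
    rw [this] at hl
    filter_upwards [hl.eventually_const_lt ha, eventually_ge_atTop 1] with x hx hx1
    refine lt_of_lt_of_le hx ?_
    have hx0 : 0 < x := by linarith
    have h1 := hL x hx1
    have h2 : c * Real.exp (-(D * (x + 1) ^ 3)) / ((1 + d) * (x + 1) ^ 3) ≤ I x := by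
      refine le_trans ?_ h1
      gcongr
      have : 1 ≤ (x + 1) ^ 3 := one_le_pow₀ (by linarith)
      nlinarith
    have h3 := Real.log_le_log (by positivity) h2
    rw [Real.log_div (by positivity) (by positivity), Real.log_mul (by positivity) (by positivity),
      Real.log_exp, Real.log_mul (by positivity) (by positivity), Real.log_pow] at h3
    have h4 : Real.log (x + 1) ≤ x := by
      have := Real.log_le_sub_one_of_pos (show 0 < x + 1 by linarith)
      linarith
    have h5 : Real.log c - Real.log (1 + d) - D * (x + 1) ^ 3 - 3 * x ≤ Real.log (I x) := by
      push_cast at h3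
      linarith
    have h6 := mul_le_mul_of_nonneg_left h5 (show 0 ≤ (x ^ 3)⁻¹ by positivity)
    refine le_trans (le_of_eq ?_) h6
    simp only [Function.comp]
    field_simp
  · intro a ha
    set ε := min (1/2) ((a + D) / (2 * D)) with hε
    have e0 : 0 < ε := lt_min (by norm_num) (div_pos (by linarith) (by linarith))
    have e1 : ε < 1 := lt_of_le_of_lt (min_le_left _ _) (by norm_num)
    have e2 : ε * D ≤ (a + D) / 2 := by
      calc ε * D ≤ (a + D) / (2 * D) * D := by gcongr; exact min_le_right _ _
        _ = _ := by field_simp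
    obtain ⟨K, hK, hU⟩ := hU ε e0 e1
    have hcont : Continuous (fun t : ℝ => Real.log K * t ^ 3 - (1 - ε) * D) := by fun_prop
    have hl := (hcont.tendsto 0).comp hinv
    have h7 : Real.log K * (0:ℝ) ^ 3 - (1 - ε) * D < a := by
      nlinarith
    filter_upwards [hl.eventually_lt_const h7, eventually_ge_atTop 1] with x hx hx1
    refine lt_of_le_of_lt ?_ hx
    have hx0 : 0 < x := by linarith
    have hI : 0 < I x := lt_of_lt_of_le (by positivity) (hL x hx1)
    have h3 := Real.log_le_log hI (hU x hx1)
    rw [Real.log_mul (by positivity) (by positivity), Real.log_exp] at h3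
    have h6 := mul_le_mul_of_nonneg_left h3 (show 0 ≤ (x ^ 3)⁻¹ by positivity)
    refine le_trans h6 (le_of_eq ?_)
    simp only [Function.comp]
    field_simp
    ring

lemma nu_upper (δ w : ℕ → ℝ) (hδ_pos : ∀ k, 0 < δ k) (c M : ℝ) (hc : 0 < c)
    (hcub : ∀ k : ℕ, δ 0 ^ 3 + c * k ≤ δ k ^ 3) (hw : ∀ k, 0 < w k) (hwM : ∀ k, w k ≤ M)
    (ε : ℝ) (hε : 0 < ε) (hε1 : ε < 1) :
    ∃ (K : ℝ) (q : ℕ → ℝ), 0 < K ∧ Summable q ∧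
      (∀ k y, 1 ≤ y → w k * mittagLeffler23 (δ k * |y|) ≤ q k) ∧
      (∀ y, 1 ≤ y → ∑' k, w k * mittagLeffler23 (δ k * |y|)
        ≤ K * Real.exp (-((1 - ε) * (4/27 * δ 0 ^ 3) * y ^ 3))) ∧
      (∀ k y, 1 ≤ y → 0 < w k * mittagLeffler23 (δ k * |y|)) := by
  obtain ⟨C, hC, hup⟩ := ml_upper ε hε hε1
  obtain ⟨c0, hc0, hlow⟩ := ml_lower
  have hM : 0 < M := (hw 0).trans_le (hwM 0)
  set β := (4/27) * (1 - ε) with hβ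
  have hβ0 : 0 < β := by have : 0 < 1 - ε := by linarith
                         positivity
  have hpos : ∀ k y, 1 ≤ y → 0 < w k * mittagLeffler23 (δ k * |y|) := by
    intro k y hy
    have h1 : 0 < δ k * |y| := mul_pos (hδ_pos k) (abs_pos.mpr (by linarith))
    have := lt_of_lt_of_le (by positivity) (hlow _ h1)
    exact mul_pos (hw k) this
  have hgeo : Summable (fun k : ℕ => Real.exp (-(β * c)) ^ k) :=
    summable_geometric_of_lt_one (Real.exp_pos _).le ((fun h => by simpa using Real.exp_lt_exp.mpr h : ∀ {z : ℝ}, z < 0 → Real.exp z < 1) (by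
      have : 0 < β * c := by positivity
      linarith))
  have hb : ∀ k y, 1 ≤ y → w k * mittagLeffler23 (δ k * |y|)
      ≤ (M * C * Real.exp (-((1 - ε) * (4/27 * δ 0 ^ 3) * y ^ 3))) * Real.exp (-(β * c)) ^ k := by
    intro k y hy
    have h1 : 0 < δ k * |y| := mul_pos (hδ_pos k) (abs_pos.mpr (by linarith))
    have h2 := hup _ h1
    rw [abs_of_nonneg (by linarith)] at h2 ⊢
    have h3 : Real.exp (-((4/27) * (1 - ε) * (δ k * y) ^ 3))
        ≤ Real.exp (-((1 - ε) * (4/27 * δ 0 ^ 3) * y ^ 3)) * Real.exp (-(β * c)) ^ k := by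
      rw [← Real.exp_nat_mul, ← Real.exp_add]
      gcongr
      have hy3 : 1 ≤ y ^ 3 := one_le_pow₀ hy
      have e1 : (δ 0 ^ 3 + c * k) * y ^ 3 ≤ δ k ^ 3 * y ^ 3 := by
        have := hcub k
        gcongr
      have e2 : c * k ≤ c * k * y ^ 3 := le_mul_of_one_le_right (by positivity) hy3
      have e3 : β * (δ 0 ^ 3 * y ^ 3 + c * k) ≤ β * (δ k ^ 3 * y ^ 3) := by
        gcongr
        linarith
      rw [hβ] at e3 ⊢
      nlinarith [e3]
    have h4 : 0 < mittagLeffler23 (δ k * y) := by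
      have := hpos k y hy
      rw [abs_of_nonneg (by linarith)] at this
      exact (pos_iff_pos_of_mul_pos this).mp (hw k)
    calc w k * mittagLeffler23 (δ k * y) ≤ M * (C * (Real.exp (-((1 - ε) * (4/27 * δ 0 ^ 3) * y ^ 3)) * Real.exp (-(β * c)) ^ k)) := by
          refine mul_le_mul (hwM k) (h2.trans ?_) h4.le hM.le
          gcongr
      _ = _ := by ring
  have hS : 0 < ∑' k : ℕ, Real.exp (-(β * c)) ^ k :=
    hgeo.tsum_pos (fun k => by positivity) 0 (by positivity)
  refine ⟨M * C * ∑' k : ℕ, Real.exp (-(β * c)) ^ k, fun k => (M * C) * Real.exp (-(β * c)) ^ k,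
    by positivity, hgeo.mul_left _, ?_, ?_, hpos⟩
  · intro k y hy
    refine (hb k y hy).trans ?_
    refine mul_le_mul_of_nonneg_right ?_ (by positivity)
    apply mul_le_of_le_one_right (by positivity)
    apply Real.exp_le_one_iff.mpr
    have h5 : 0 < 1 - ε := by linarith
    have := hδ_pos 0
    have : 0 < (1 - ε) * (4/27 * δ 0 ^ 3) * y ^ 3 := by positivity
    linarith
  · intro y hy
    have hs2 := hgeo.mul_left (M * C * Real.exp (-((1 - ε) * (4/27 * δ 0 ^ 3) * y ^ 3)))
    have hs1 : Summable (fun k => w k * mittagLeffler23 (δ k * |y|)) :=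
      Summable.of_nonneg_of_le (fun k => (hpos k y hy).le) (fun k => hb k y hy) hs2
    refine (hs1.tsum_le_tsum (fun k => hb k y hy) hs2).trans (le_of_eq ?_)
    rw [tsum_mul_left]; ring

lemma tail_bound (ν : ℝ → ℝ) (K B : ℝ) (hK : 0 < K) (hB : 0 < B)
    (hcont : ContinuousOn ν (Ici 1)) (hpos : ∀ y, 1 ≤ y → 0 ≤ ν y)
    (hup : ∀ y, 1 ≤ y → ν y ≤ K * Real.exp (-(B * y ^ 3))) (x : ℝ) (hx : 1 ≤ x) :
    IntegrableOn ν (Ioi x) ∧ ∫ y in Ioi x, ν y ≤ (K / B) * Real.exp (-(B * x ^ 3)) := by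
  have hb : ∀ y ∈ Ioi x, ν y ≤ (K * Real.exp (-(B * x ^ 3) + B * x)) * Real.exp (-B * y) := by
    intro y hy
    have hy : x < y := hy
    refine (hup y (by linarith)).trans ?_
    rw [mul_assoc, ← Real.exp_add]
    gcongr
    have : y - x ≤ y ^ 3 - x ^ 3 := by
      have h1 : y ^ 3 - x ^ 3 = (y - x) * (y ^ 2 + x * y + x ^ 2) := by ring
      rw [h1]
      apply le_mul_of_one_le_right (by linarith)
      nlinarith
    nlinarith
  have hint := (exp_neg_integrableOn_Ioi x hB).const_mul (K * Real.exp (-(B * x ^ 3) + B * x))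
  have hI : IntegrableOn ν (Ioi x) := by
    refine Integrable.mono' hint ?_ ?_
    · exact (hcont.mono (fun y hy => le_of_lt (lt_of_le_of_lt hx hy))).aestronglyMeasurable
        measurableSet_Ioi
    · filter_upwards [ae_restrict_mem measurableSet_Ioi] with y hy
      rw [Real.norm_of_nonneg (hpos y (le_of_lt (lt_of_le_of_lt hx hy)))]
      exact hb y hy
  refine ⟨hI, ?_⟩
  refine (setIntegral_mono_on hI hint measurableSet_Ioi hb).trans (le_of_eq ?_)
  rw [integral_const_mul, integral_exp_mul_Ioi (by linarith), Real.exp_add,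
    show -B * x = -(B * x) by ring, Real.exp_neg (B * x)]
  field_simp

/-- tail asymptotics of the position of the TSRM:
`lim_{x→∞} x⁻³·log P(X(1) > x) = -(4/27)·(δ'₁)³`, where
`P(X(1) > x) = ∫_x^∞ ν₁(y) dy` with `ν₁(y) = ∑ₖ pₖ·(δₖ/2)·f_{2/3}(δₖ|y|)`.
Here `δ k` stands for `δ'_{k+1}` (so `δ 0 = δ'₁`), the zeros of `h ↦ u'(-h)` on `(0,∞)`,
and `pₖ = (u'(0)²/2)·δₖ⁻⁴`. -/
theorem stmt19
    (u : ℝ → ℝ) (hu_smooth : ContDiff ℝ 2 u)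
    (hu_ode : ∀ h : ℝ, deriv (deriv u) h = 2 * h * u h)
    (hu_zero : u 0 = 1)
    (hu'_zero : deriv u 0 = -((6:ℝ) ^ ((1:ℝ)/3) * Real.Gamma (2/3) / Real.Gamma (1/3)))
    (hu_pos : ∀ h : ℝ, 0 ≤ h → 0 < u h)
    (hu_anti : StrictAntiOn u (Ici 0))
    (hu_lim : Tendsto u atTop (𝓝 0))
    (δ : ℕ → ℝ) (hδ_pos : ∀ k, 0 < δ k) (hδ_mono : StrictMono δ)
    (hδ_zero : ∀ k, deriv u (-(δ k)) = 0)
    (hδ_all : ∀ x : ℝ, 0 < x → deriv u (-x) = 0 → ∃ k, δ k = x)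
    (p : ℕ → ℝ) (hp : ∀ k, p k = (deriv u 0) ^ 2 / 2 * ((δ k) ^ 4)⁻¹) :
    Tendsto (fun x : ℝ => (x ^ 3)⁻¹ *
        Real.log (∫ y in Ioi x, ∑' k : ℕ, p k * (δ k / 2) * mittagLeffler23 (δ k * |y|)))
      atTop (𝓝 (-(4/27) * (δ 0) ^ 3)) := by
  have hu0 : deriv u 0 ≠ 0 := by
    rw [hu'_zero]
    have g2 := Real.Gamma_pos_of_pos (show (0:ℝ) < 2/3 by norm_num)
    have g1 := Real.Gamma_pos_of_pos (show (0:ℝ) < 1/3 by norm_num)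
    have : 0 < (6:ℝ) ^ ((1:ℝ)/3) * Real.Gamma (2/3) / Real.Gamma (1/3) := by positivity
    linarith
  have hgap : ∀ k, 1 ≤ (δ (k + 1) - δ k) ^ 2 * (2 * δ (k + 1)) := by
    intro k
    have hlt : δ k < δ (k + 1) := hδ_mono (Nat.lt_succ_self k)
    refine gap_zero u hu_smooth hu_ode _ _ (hδ_pos k) hlt (hδ_zero k) (hδ_zero (k + 1)) ?_
    intro h0
    obtain ⟨j, hj⟩ := hδ_all _ (by linarith [hδ_pos k]) h0
    have h1 : k < j := hδ_mono.lt_iff_lt.mp (by rw [hj]; linarith)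
    have h2 : j < k + 1 := hδ_mono.lt_iff_lt.mp (by rw [hj]; linarith)
    omega
  obtain ⟨c, hc, hcub⟩ := cube_growth δ hδ_pos hδ_mono hgap
  have hd0 := hδ_pos 0
  set w : ℕ → ℝ := fun k => p k * (δ k / 2) with hwdef
  have hw : ∀ k, 0 < w k := by
    intro k
    have := hδ_pos k
    simp only [hwdef, hp]
    positivity
  have hwM : ∀ k, w k ≤ (deriv u 0) ^ 2 / 4 * (δ 0 ^ 3)⁻¹ := by
    intro k
    have hk := hδ_pos k
    have hle : δ 0 ≤ δ k := hδ_mono.monotone (Nat.zero_le _)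
    have : w k = (deriv u 0) ^ 2 / 4 * (δ k ^ 3)⁻¹ := by
      simp only [hwdef, hp]
      field_simp
      norm_num
    rw [this]
    gcongr
  have hnu := nu_upper δ w hδ_pos c _ hc hcub hw hwM
  set ν : ℝ → ℝ := fun y => ∑' k : ℕ, w k * mittagLeffler23 (δ k * |y|) with hν
  change Tendsto (fun x : ℝ => (x ^ 3)⁻¹ * Real.log (∫ y in Ioi x, ν y)) atTop _
  have hcont : ContinuousOn ν (Ici 1) := by
    obtain ⟨K, q, hK, hq, hterm, -, hpos⟩ := hnu (1/2) (by norm_num) (by norm_num)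
    refine continuousOn_tsum (u := q) (fun k => ?_) hq ?_
    · apply Continuous.continuousOn
      have := ml_cont
      fun_prop
    · intro k y hy
      rw [Real.norm_of_nonneg (hpos k y hy).le]
      exact hterm k y hy
  have hνlow : ∀ y, 1 ≤ y → w 0 * mittagLeffler23 (δ 0 * y) ≤ ν y ∧ 0 ≤ ν y := by
    intro y hy
    obtain ⟨K, q, hK, hq, hterm, -, hpos⟩ := hnu (1/2) (by norm_num) (by norm_num)
    have hs : Summable (fun k => w k * mittagLeffler23 (δ k * |y|)) :=
      Summable.of_nonneg_of_le (fun k => (hpos k y hy).le) (fun k => hterm k y hy) hq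
    have h1 := hs.le_tsum 0 (fun k _ => (hpos k y hy).le)
    refine ⟨?_, (hpos 0 y hy).le.trans h1⟩
    rw [abs_of_nonneg (by linarith : (0:ℝ) ≤ y)] at h1
    simpa only [hν, abs_of_nonneg (by linarith : (0:ℝ) ≤ y)] using h1
  rw [show -(4/27) * δ 0 ^ 3 = -(4/27 * δ 0 ^ 3) by ring]
  apply log_lim _ (4/27 * δ 0 ^ 3) (δ 0 ^ 3) (by positivity) (by positivity)
  · intro ε hε hε1
    obtain ⟨K, q, hK, hq, hterm, hup, hpos⟩ := hnu ε hε hε1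
    have hB : 0 < (1 - ε) * (4/27 * δ 0 ^ 3) := mul_pos (by linarith) (by positivity)
    refine ⟨K / ((1 - ε) * (4/27 * δ 0 ^ 3)), by positivity, fun x hx => ?_⟩
    exact (tail_bound ν K _ hK hB hcont (fun y hy => (hνlow y hy).2) hup x hx).2
  · obtain ⟨c0, hc0, hlow⟩ := ml_lower
    refine ⟨w 0 * c0, mul_pos (hw 0) hc0, fun x hx => ?_⟩
    obtain ⟨K, q, hK, hq, hterm, hup, hpos⟩ := hnu (1/2) (by norm_num) (by norm_num)
    have hI := (tail_bound ν K _ hK (by positivity) hcont (fun y hy => (hνlow y hy).2) hup x hx).1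
    have hsub : Ioc x (x + 1) ⊆ Ioi x := fun y hy => hy.1
    have h1 : ∫ y in Ioc x (x + 1), ν y ≤ ∫ y in Ioi x, ν y := by
      apply setIntegral_mono_set hI
      · filter_upwards [ae_restrict_mem measurableSet_Ioi] with y hy
        exact (hνlow y (le_of_lt (lt_of_le_of_lt hx hy))).2
      · exact Eventually.of_forall hsub
    refine le_trans ?_ h1
    set b := w 0 * c0 * Real.exp (-(4/27 * δ 0 ^ 3 * (x + 1) ^ 3)) / (1 + δ 0 ^ 3 * (x + 1) ^ 3) with hb
    have h2 : ∫ y in Ioc x (x + 1), b = b := by simp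
    rw [← h2]
    apply setIntegral_mono_on (by simp) (hI.mono_set hsub) measurableSet_Ioc
    intro y hy
    have hy0 : 0 < y := by linarith [hy.1]
    refine le_trans ?_ (hνlow y (by linarith [hy.1])).1
    have h3 := hlow (δ 0 * y) (by positivity)
    have hw0 := hw 0
    have h4 : y ^ 3 ≤ (x + 1) ^ 3 := by
      have := hy.2
      gcongr
    calc b = w 0 * (c0 * Real.exp (-(4/27 * δ 0 ^ 3 * (x + 1) ^ 3)) / (1 + δ 0 ^ 3 * (x + 1) ^ 3)) := by
          rw [hb]; ring
      _ ≤ w 0 * (c0 * Real.exp (-(4/27 * (δ 0 * y) ^ 3)) / (1 + (δ 0 * y) ^ 3)) := by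
          rw [mul_pow, ← mul_assoc]
          gcongr
      _ ≤ _ := by gcongr
end
end
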